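/- arXiv:2601.07428 — 3 statements merged into one kernel-verified Lean document; each statement's English description precedes it below -/
import Mathlib

section
/- For every gradually fragmented ideal I on ω, add*_ω(I) ≥ add_t(𝒩), the transitive additivity of the null ideal on 2^ω. -/
open Cardinal Filter Set
open scoped ENNReal

noncomputable section

/-- An ideal on a (countable) set `X`, in the sense of the paper: a proper family of
subsets of `X` closed under taking subsets and finite unions and containing all
finite subsets of `X`. -/
structure IsIdealOn {X : Type} (I : Set (Set X)) : Prop where
  subset_mem : ∀ ⦃A B : Set X⦄, A ⊆ B → B ∈ I → A ∈ I
  union_mem : ∀ ⦃A B : Set X⦄, A ∈ I → B ∈ I → A ∪ B ∈ I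
  finite_mem : ∀ ⦃A : Set X⦄, A.Finite → A ∈ I
  proper : (univ : Set X) ∉ I

/-- The finite initial segment `x ↾ n` of `x : X^ω`, as a list (an element of `X^{<ω}`). -/
def seg {X : Type} (x : ℕ → X) (n : ℕ) : List X := (List.range n).map x

/-- The `I`-Miller null ideal `M_I`: the σ-ideal on `X^ω` generated by the sets
`M_φ = {x | ∀^∞ n, x n ∈ φ (x ↾ n)}`, where `φ : X^{<ω} → I`.  (A set is in the
generated σ-ideal iff it is covered by countably many generators.) -/
def MIdeal {X : Type} (I : Set (Set X)) : Set (Set (ℕ → X)) :=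
  {A | ∃ φ : ℕ → List X → Set X, (∀ n s, φ n s ∈ I) ∧
    A ⊆ ⋃ n, {x : ℕ → X | ∀ᶠ m in atTop, x m ∈ φ n (seg x m)}}

/-- The σ-ideal `K_I` on `X^ω` generated by the sets
`K_φ = {x | ∀^∞ n, x n ∈ φ n}`, where `φ : ω → I`. -/
def KIdeal {X : Type} (I : Set (Set X)) : Set (Set (ℕ → X)) :=
  {A | ∃ φ : ℕ → ℕ → Set X, (∀ n m, φ n m ∈ I) ∧
    A ⊆ ⋃ n, {x : ℕ → X | ∀ᶠ m in atTop, x m ∈ φ n m}}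

/-- Additivity `add(J)` of a (σ-)ideal `J`: the least cardinality of a subfamily of `J`
whose union is not in `J`. -/
def addIdeal {Y : Type} (J : Set (Set Y)) : Cardinal :=
  sInf {c | ∃ 𝒜 : Set (Set Y), 𝒜 ⊆ J ∧ ⋃₀ 𝒜 ∉ J ∧ Cardinal.mk 𝒜 = c}

/-- Covering number `cov(J)`: the least cardinality of a subfamily of `J` covering `Y`. -/
def covIdeal {Y : Type} (J : Set (Set Y)) : Cardinal :=
  sInf {c | ∃ 𝒜 : Set (Set Y), 𝒜 ⊆ J ∧ ⋃₀ 𝒜 = Set.univ ∧ Cardinal.mk 𝒜 = c}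

/-- Uniformity `non(J)`: the least cardinality of a subset of `Y` not in `J`. -/
def nonIdeal {Y : Type} (J : Set (Set Y)) : Cardinal :=
  sInf {c | ∃ S : Set Y, S ∉ J ∧ Cardinal.mk S = c}

/-- Cofinality `cof(J)`: the least cardinality of a cofinal (w.r.t. `⊆`) subfamily of `J`. -/
def cofIdeal {Y : Type} (J : Set (Set Y)) : Cardinal :=
  sInf {c | ∃ 𝒜 : Set (Set Y), 𝒜 ⊆ J ∧ (∀ B ∈ J, ∃ A ∈ 𝒜, B ⊆ A) ∧ Cardinal.mk 𝒜 = c}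

/-- `f ≤* g`: eventual domination on `ω^ω`. -/
def LeStar (f g : ℕ → ℕ) : Prop := ∀ᶠ n in atTop, f n ≤ g n

/-- The bounding number `𝔟`. -/
def bNum : Cardinal :=
  sInf {c | ∃ F : Set (ℕ → ℕ), (∀ g : ℕ → ℕ, ∃ f ∈ F, ¬ LeStar f g) ∧ Cardinal.mk F = c}

/-- The dominating number `𝔡`. -/
def dNum : Cardinal :=
  sInf {c | ∃ F : Set (ℕ → ℕ), (∀ f : ℕ → ℕ, ∃ g ∈ F, LeStar f g) ∧ Cardinal.mk F = c}

/-- `A ⊆* B`: almost inclusion (`A \ B` finite). -/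
def AlSub {X : Type} (A B : Set X) : Prop := (A \ B).Finite

/-- The set of cardinalities of witnessing families for `add*_ω(I)`: families `𝒜 ⊆ I`
such that for every countable `B̄ ⊆ I` some `A ∈ 𝒜` satisfies `A ⊄* B` for all `B ∈ B̄`.
`add*_ω(I)` is the minimum of this set (`∞` if it is empty). -/
def addStarOmegaFam {X : Type} (I : Set (Set X)) : Set Cardinal :=
  {c | ∃ 𝒜 : Set (Set X), 𝒜 ⊆ I ∧
    (∀ B : ℕ → Set X, (∀ n, B n ∈ I) → ∃ A ∈ 𝒜, ∀ n, ¬ AlSub A (B n)) ∧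
    Cardinal.mk 𝒜 = c}

/-- The set of cardinalities of witnessing families for `cof*_ω(I)`: families `𝒜` of
countable subsets of `I` such that for every countable `B̄ ⊆ I` there is `Ā ∈ 𝒜` with:
every `B ∈ B̄` satisfies `B ⊆* A` for some `A ∈ Ā`.  `cof*_ω(I)` is the minimum. -/
def cofStarOmegaFam {X : Type} (I : Set (Set X)) : Set Cardinal :=
  {c | ∃ 𝒜 : Set (Set (Set X)), (∀ As ∈ 𝒜, As.Countable ∧ As ⊆ I) ∧
    (∀ B : ℕ → Set X, (∀ n, B n ∈ I) → ∃ As ∈ 𝒜, ∀ n, ∃ A ∈ As, AlSub (B n) A) ∧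
    Cardinal.mk 𝒜 = c}

/-- The set of cardinalities of witnessing families for `non*_ω(I)`: families `𝒜` of
infinite subsets of `X` such that for every countable `B̄ ⊆ I` there is `A ∈ 𝒜` with
`A ∩ B` finite for all `B ∈ B̄`.  `non*_ω(I)` is the minimum of this set. -/
def nonStarOmegaFam {X : Type} (I : Set (Set X)) : Set Cardinal :=
  {c | ∃ 𝒜 : Set (Set X), (∀ A ∈ 𝒜, A.Infinite) ∧
    (∀ B : ℕ → Set X, (∀ n, B n ∈ I) → ∃ A ∈ 𝒜, ∀ n, (A ∩ B n).Finite) ∧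
    Cardinal.mk 𝒜 = c}

/-- The set of cardinalities of witnessing families for `cov*(I)`: families `𝒜 ⊆ I` such
that every infinite `B ⊆ X` has infinite intersection with some member of `𝒜`.
`cov*(I)` is the minimum of this set (`∞` if it is empty, i.e. if `I` is not tall). -/
def covStarFam {X : Type} (I : Set (Set X)) : Set Cardinal :=
  {c | ∃ 𝒜 : Set (Set X), 𝒜 ⊆ I ∧
    (∀ B : Set X, B.Infinite → ∃ A ∈ 𝒜, (A ∩ B).Infinite) ∧ Cardinal.mk 𝒜 = c}

/-- The set of cardinalities of witnessing families for `non*(I)`: families `𝒜` of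
infinite subsets of `X` such that every `B ∈ I` has finite intersection with some
member of `𝒜`.  `non*(I)` is the minimum of this set. -/
def nonStarFam {X : Type} (I : Set (Set X)) : Set Cardinal :=
  {c | ∃ 𝒜 : Set (Set X), (∀ A ∈ 𝒜, A.Infinite) ∧
    (∀ B ∈ I, ∃ A ∈ 𝒜, (A ∩ B).Finite) ∧ Cardinal.mk 𝒜 = c}

/-- The meager ideal of the product space `X^ω`, where `X` carries the discrete
topology (for countable `X` this is a Polish space). -/
def meagerIdeal (X : Type) : Set (Set (ℕ → X)) :=
  letI : TopologicalSpace X := ⊥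
  {A : Set (ℕ → X) | IsMeagre A}

/-- The Fubini product `I ⊗ J` of two ideals. -/
def Fubini {X Y : Type} (I : Set (Set X)) (J : Set (Set Y)) : Set (Set (X × Y)) :=
  {A | {x : X | {y : Y | (x, y) ∈ A} ∉ J} ∈ I}

/-- The ideal `Fin` of finite subsets of `X`. -/
def finIdeal (X : Type) : Set (Set X) := {A : Set X | A.Finite}

/-- The nowhere dense ideal on `2^{<ω}`: `A` belongs to it iff for every `s` there is an
extension `t ⊇ s` none of whose extensions belongs to `A`. -/
def nwdIdeal : Set (Set (List Bool)) :=
  {A | ∀ s : List Bool, ∃ t : List Bool, s <+: t ∧ ∀ u : List Bool, t <+: u → u ∉ A}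

/-- A submeasure: monotone, finitely subadditive, vanishing on `∅`. -/
def IsSubmeasure (φ : Set ℕ → ℝ≥0∞) : Prop :=
  φ ∅ = 0 ∧ (∀ A B : Set ℕ, A ⊆ B → φ A ≤ φ B) ∧ ∀ A B : Set ℕ, φ (A ∪ B) ≤ φ A + φ B

/-- `I` is gradually fragmented: there are a partition `⟨P n⟩` of `ω` into nonempty finite
sets and submeasures `φ n` with `A ∈ I ↔ sup_n φ n (A ∩ P n) < ∞`, together with
`f : ω → ω` such that for all `n, i`, for all but finitely many `j`: any family of at
most `i` subsets of `P j`, each of `φ j`-value `≤ n`, has union of `φ j`-value `≤ f n`. -/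
def GraduallyFragmented (I : Set (Set ℕ)) : Prop :=
  ∃ (P : ℕ → Set ℕ) (φ : ℕ → Set ℕ → ℝ≥0∞) (f : ℕ → ℕ),
    (∀ n, (P n).Finite) ∧ (∀ n, (P n).Nonempty) ∧
    (∀ n m, n ≠ m → Disjoint (P n) (P m)) ∧ (⋃ n, P n) = Set.univ ∧
    (∀ n, IsSubmeasure (φ n)) ∧
    (∀ A : Set ℕ, A ∈ I ↔ (⨆ n, φ n (A ∩ P n)) < ⊤) ∧
    (∀ n i : ℕ, ∀ᶠ j in atTop, ∀ ℬ : Finset (Set ℕ), ℬ.card ≤ i →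
      (∀ B ∈ ℬ, B ⊆ P j) → (∀ B ∈ ℬ, φ j B ≤ (n : ℝ≥0∞)) →
      φ j (⋃ B ∈ ℬ, B) ≤ ((f n : ℕ) : ℝ≥0∞))

/-- The basic clopen cylinder of `2^ω` determined by a finite binary string. -/
def cylSet (s : List Bool) : Set (ℕ → Bool) :=
  {x | ∀ i : Fin s.length, x i.val = s.get i}

/-- `A ⊆ 2^ω` is null for the uniform (coin-flipping) product measure: for every `ε > 0`
it is covered by countably many cylinders of total weight `≤ ε` (the cylinder of a
string `s` has weight `2^{-|s|}`). -/
def IsNullCantor (A : Set (ℕ → Bool)) : Prop :=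
  ∀ ε : ℝ≥0∞, 0 < ε → ∃ s : ℕ → List Bool,
    A ⊆ (⋃ n, cylSet (s n)) ∧ (∑' n : ℕ, (2⁻¹ : ℝ≥0∞) ^ (s n).length) ≤ ε

/-- Coordinatewise addition modulo 2 on `2^ω`. -/
def xorAdd (x y : ℕ → Bool) : ℕ → Bool := fun n => xor (x n) (y n)

/-- The transitive additivity `add_t(𝒩)` of the null ideal of `2^ω`:
`min {|A| : A ⊆ 2^ω ∧ ∃ X ∈ 𝒩, A + X ∉ 𝒩}`. -/
def addTNull : Cardinal :=
  sInf {c | ∃ A : Set (ℕ → Bool),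
    (∃ N : Set (ℕ → Bool), IsNullCantor N ∧ ¬ IsNullCantor (Set.image2 xorAdd A N)) ∧
    Cardinal.mk A = c}

/-- Kada's cardinal invariant `𝔩`: the least `κ` such that for every `g ∈ ω^ω` there is a
family `𝒮`, of size `κ`, of slaloms `S` with `S i ⊆ {0, …, g i}` and `|S i| ≤ i`, such
that every `f ≤* g` satisfies `f ∈* S` for some `S ∈ 𝒮`. -/
def lNum : Cardinal :=
  sInf {c : Cardinal | ∀ g : ℕ → ℕ, ∃ 𝒮 : Set (ℕ → Finset ℕ),
    (∀ S ∈ 𝒮, ∀ i : ℕ, S i ⊆ Finset.range (g i + 1) ∧ (S i).card ≤ i) ∧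
    (∀ f : ℕ → ℕ, LeStar f g → ∃ S ∈ 𝒮, ∀ᶠ i in atTop, f i ∈ S i) ∧
    Cardinal.mk 𝒮 = c}

/-- Membership in `C ⊆ 2^ω` only depends on the first `n` coordinates. -/
def DeterminedBy (C : Set (ℕ → Bool)) (n : ℕ) : Prop :=
  ∀ x y : ℕ → Bool, (∀ i < n, x i = y i) → (x ∈ C ↔ y ∈ C)

/-- Extension of a finite binary string by `false`s. -/
def extendFalse {n : ℕ} (s : Fin n → Bool) : ℕ → Bool :=
  fun i => if h : i < n then s ⟨i, h⟩ else false

/-- `C ⊆ 2^ω` has uniform product measure `1/2`: for some `n`, membership in `C` depends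
only on the first `n` coordinates and exactly half of the `2^n` cylinders of level `n`
are included in `C`. -/
def HalfMeasure (C : Set (ℕ → Bool)) : Prop :=
  ∃ n : ℕ, DeterminedBy C n ∧
    2 * Nat.card {s : Fin n → Bool // extendFalse s ∈ C} = 2 ^ n

/-- Clopenness in the Cantor space `2^ω` (`Bool` discrete, product topology). -/
def IsClopenCantor (C : Set (ℕ → Bool)) : Prop :=
  letI : TopologicalSpace Bool := ⊥
  IsClopen C

/-- Closedness in the Cantor space `2^ω`. -/
def IsClosedCantor (C : Set (ℕ → Bool)) : Prop :=
  letI : TopologicalSpace Bool := ⊥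
  IsClosed C

/-- `Ω`: the (countable) set of clopen subsets of `2^ω` of measure `1/2`. -/
abbrev SoleckiBase : Type := {C : Set (ℕ → Bool) // IsClopenCantor C ∧ HalfMeasure C}

/-- The Solecki ideal `𝒮` on `Ω`: the ideal generated by the sets
`I_y = {C ∈ Ω : y ∈ C}` for `y ∈ 2^ω`. -/
def SoleckiIdeal : Set (Set SoleckiBase) :=
  {A | ∃ F : Finset (ℕ → Bool), A ⊆ ⋃ y ∈ F, {C : SoleckiBase | y ∈ C.val}}

/-- `cov_ω(𝒩)`: the least cardinality of a family of Lebesgue-null sets of reals such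
that every countable set of reals is contained in one of them. -/
def covOmegaNull : Cardinal :=
  sInf {c | ∃ 𝒜 : Set (Set ℝ), (∀ N ∈ 𝒜, MeasureTheory.volume N = 0) ∧
    (∀ B : Set ℝ, B.Countable → ∃ N ∈ 𝒜, B ⊆ N) ∧ Cardinal.mk 𝒜 = c}

/-- `non(𝒩)`: the least cardinality of a non-null set of reals. -/
def nonNullReal : Cardinal :=
  sInf {c | ∃ S : Set ℝ, MeasureTheory.volume S ≠ 0 ∧ Cardinal.mk S = c}

/-- The eventually different ideal `ℰ𝒟` on `ω × ω`. -/
def EDIdeal : Set (Set (ℕ × ℕ)) :=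
  {A | ∃ k : ℕ, ∀ᶠ n in atTop,
    {m : ℕ | (n, m) ∈ A}.Finite ∧ {m : ℕ | (n, m) ∈ A}.ncard ≤ k}

/-- Characteristic function identifying `P(ω)` with `2^ω`. -/
def chiSet (A : Set ℕ) : ℕ → Bool :=
  fun n => @decide (n ∈ A) (Classical.propDecidable _)

/-- `I ⊆ P(ω)` is `F_σ`: under the identification `P(ω) ≅ 2^ω`, `I` is a countable
union of closed subsets of the Cantor space. -/
def IsFSigmaIdeal (I : Set (Set ℕ)) : Prop :=
  ∃ C : ℕ → Set (ℕ → Bool), (∀ n, IsClosedCantor (C n)) ∧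
    ∀ A : Set ℕ, A ∈ I ↔ chiSet A ∈ ⋃ n, C n

/-- The underlying countable set of `Fin^{⊗(n+1)}`: `FinPowType 0 = ω`,
`FinPowType (n+1) = ω × FinPowType n`. -/
def FinPowType : ℕ → Type
  | 0 => ℕ
  | n + 1 => ℕ × FinPowType n

/-- The iterated Fubini power of `Fin`: `FinPowIdeal 0 = Fin`, and
`FinPowIdeal (n+1) = Fin ⊗ FinPowIdeal n`; thus `Fin^{⊗k} = FinPowIdeal (k-1)`. -/
def FinPowIdeal : (n : ℕ) → Set (Set (FinPowType n))
  | 0 => finIdeal ℕ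
  | n + 1 => Fubini (finIdeal ℕ) (FinPowIdeal n)

/-- `π` `k`-constantly bounding-predicts `f`: for all but finitely many `i` there is
`j ∈ [i, i + k)` with `f j ≤ π (f ↾ j)`. -/
def ConstBddPred (k : ℕ) (π : List ℕ → ℕ) (f : ℕ → ℕ) : Prop :=
  ∀ᶠ i in atTop, ∃ j : ℕ, i ≤ j ∧ j < i + k ∧ f j ≤ π (seg f j)

/-- The constant bounding evasion number `𝔢^const_≤(k)`. -/
def eConstLe (k : ℕ) : Cardinal :=
  sInf {c | ∃ F : Set (ℕ → ℕ),
    (∀ π : List ℕ → ℕ, ∃ f ∈ F, ¬ ConstBddPred k π f) ∧ Cardinal.mk F = c}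

/-- The constant bounding prediction number `𝔳^const_≤(k)`. -/
def vConstLe (k : ℕ) : Cardinal :=
  sInf {c | ∃ Ps : Set (List ℕ → ℕ),
    (∀ f : ℕ → ℕ, ∃ π ∈ Ps, ConstBddPred k π f) ∧ Cardinal.mk Ps = c}

/-- The asymptotic density zero ideal `𝒵` on `ω`. -/
def densityZero : Set (Set ℕ) :=
  {A : Set ℕ | Tendsto (fun n : ℕ => ((A ∩ Iio n).ncard : ℝ) / (n : ℝ)) atTop (nhds (0 : ℝ))}

/-- The σ-ideal `ℰ` on `2^ω` generated by the closed null sets. -/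
def EIdeal : Set (Set (ℕ → Bool)) :=
  {A | ∃ C : ℕ → Set (ℕ → Bool),
    (∀ n, IsClosedCantor (C n) ∧ IsNullCantor (C n)) ∧ A ⊆ ⋃ n, C n}

/-!
A set `A` is coded by its traces on finite windows `W n`. Attach to each `x : α → Bool` a table of
fair coin flips with a row for every `n` and every word over `W n`; the first `n` entries of the
`n`-th row selected by `x` vanish with probability `2⁻ⁿ`, so almost surely this happens for only
finitely many `n`. If `F` has fewer than `add_t(𝒩)` elements, the translates by `F` of the
exceptional null set lie in an open set of measure less than one, and its complement carries a
closed set `K` all of whose nonempty relatively open pieces have positive measure. By Baire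
category, every `a ∈ F` has such a piece, from a fixed countable base, which for almost all `n`
misses the event that the row selected by `x + a` starts with `n` zeros. A set of positive measure
can eventually miss only `2ⁿ` of these events at stage `n`, as the rows are independent. Hence `F`
is captured by countably many slaloms of width `2ⁿ`.

For a gradually fragmented ideal, let block `j` belong to window `g j`, where `g` tends to infinity
so slowly that unions of `2 ^ g j` sets of `φ j`-value at most `k` keep `φ j`-value at most `f k`.
Each slalom and each `k` then give one member of the ideal, the union over all `j` of the captured
sets of `φ j`-value at most `k`.
-/

open MeasureTheory ProbabilityTheory
open scoped Function symmDiff Topology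

section CoinMeasure

variable {ι α β κ : Type*}

/-- The uniform product measure on `ι → Bool`, i.e. the law of independent fair coin flips
indexed by `ι`. -/
def coinMeasure (ι : Type*) : Measure (ι → Bool) :=
  Measure.infinitePi fun _ => uniformOn (univ : Set Bool)

instance : IsProbabilityMeasure (coinMeasure ι) := by
  unfold coinMeasure
  infer_instance

lemma uniformOn_univ_bool_singleton (b : Bool) : uniformOn (univ : Set Bool) {b} = 2⁻¹ := by
  rw [uniformOn_univ]
  simp

lemma coinMeasure_setOfPred_eqOn (s : Finset ι) (f : ι → Bool) :
    coinMeasure ι {x | ∀ i ∈ s, x i = f i} = 2⁻¹ ^ s.card := by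
  have hbox : {x : ι → Bool | ∀ i ∈ s, x i = f i} = (s : Set ι).pi fun i => {f i} := by
    ext x
    simp [Set.mem_pi]
  rw [hbox, coinMeasure, Measure.infinitePi_pi _ fun i _ => measurableSet_singleton _]
  simp only [uniformOn_univ_bool_singleton, Finset.prod_const]

lemma measurePreserving_comp_equiv (e : α ≃ β) :
    MeasurePreserving (fun x : β → Bool => x ∘ e) (coinMeasure β) (coinMeasure α) where
  measurable := by fun_prop
  map_eq := Measure.map_infinitePi_infinitePi_of_inj e.injective

lemma measurePreserving_sumElim :
    MeasurePreserving (fun z : (α → Bool) × (β → Bool) => Sum.elim z.1 z.2)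
      ((coinMeasure α).prod (coinMeasure β)) (coinMeasure (α ⊕ β)) := by
  have hmeas : Measurable fun z : (α → Bool) × (β → Bool) => Sum.elim z.1 z.2 := by
    refine measurable_pi_lambda _ fun i => ?_
    rcases i with i | i
    · simp only [Sum.elim_inl]; fun_prop
    · simp only [Sum.elim_inr]; fun_prop
  refine ⟨hmeas, Measure.eq_infinitePi _ fun s t ht => ?_⟩
  have hbox : (fun z : (α → Bool) × (β → Bool) => Sum.elim z.1 z.2) ⁻¹' (s : Set (α ⊕ β)).pi t =
      (s.toLeft : Set α).pi (fun i => t (.inl i)) ×ˢ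
        (s.toRight : Set β).pi (fun i => t (.inr i)) := by
    ext z
    simp [Set.mem_pi]
  rw [Measure.map_apply hmeas (.pi s.countable_toSet fun _ _ => ht _), hbox, Measure.prod_prod,
    coinMeasure, coinMeasure, Measure.infinitePi_pi _ fun i _ => ht _,
    Measure.infinitePi_pi _ fun i _ => ht _]
  conv_rhs => rw [← Finset.toLeft_disjSum_toRight (u := s), Finset.prod_disjSum]

lemma coinMeasure_sum_eq_zero {D : Set (α ⊕ β → Bool)} (hD : MeasurableSet D)
    (h : ∀ x : α → Bool, coinMeasure β {y | Sum.elim x y ∈ D} = 0) :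
    coinMeasure (α ⊕ β) D = 0 := by
  rw [← measurePreserving_sumElim.measure_preimage hD.nullMeasurableSet]
  exact Measure.measure_prod_null_of_ae_null (measurePreserving_sumElim.measurable hD)
    (ae_of_all _ h)

lemma coinMeasure_setOfPred_exists_lt_eq_true (d : ℕ) :
    coinMeasure ℕ {t | ∃ i < d, t i = true} = 1 - 2⁻¹ ^ d := by
  have hmeas : MeasurableSet {t : ℕ → Bool | ∀ i ∈ Finset.range d, t i = false} := by
    measurability
  have hcompl : {t : ℕ → Bool | ∃ i < d, t i = true} =
      {t | ∀ i ∈ Finset.range d, t i = false}ᶜ := by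
    ext t
    simp
  rw [hcompl, prob_compl_eq_one_sub hmeas, coinMeasure_setOfPred_eqOn _ fun _ => false,
    Finset.card_range]

lemma coinMeasure_setOfPred_forall_exists_lt_eq_true (P : Finset κ) (d : κ → ℕ) :
    coinMeasure (κ × ℕ) {T | ∀ p ∈ P, ∃ i < d p, T (p, i) = true} =
      ∏ p ∈ P, (1 - 2⁻¹ ^ d p) := by
  have hmeas (p : κ) : MeasurableSet {t : ℕ → Bool | ∃ i < d p, t i = true} := by
    measurability
  have hbox : {T : κ × ℕ → Bool | ∀ p ∈ P, ∃ i < d p, T (p, i) = true} =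
      MeasurableEquiv.curry κ ℕ Bool ⁻¹'
        (P : Set κ).pi fun p => {t | ∃ i < d p, t i = true} := by
    ext T
    simp [Set.mem_pi]
  rw [hbox, ← MeasurableEquiv.map_apply, coinMeasure,
    Measure.infinitePi_map_curry fun _ _ => uniformOn univ,
    Measure.infinitePi_pi _ fun p _ => hmeas p]
  exact Finset.prod_congr rfl fun p _ => coinMeasure_setOfPred_exists_lt_eq_true (d p)

lemma one_sub_inv_two_pow_pow_le {n c : ℕ} (hc : 2 ^ n ≤ c) :
    (1 - (2⁻¹ : ℝ≥0∞) ^ n) ^ c ≤ ENNReal.ofReal (Real.exp (-1)) := by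
  have hle : (2⁻¹ : ℝ) ^ n ≤ 1 := pow_le_one₀ (by norm_num) (by norm_num)
  have hreal : 1 - (2⁻¹ : ℝ≥0∞) ^ n = ENNReal.ofReal (1 - 2⁻¹ ^ n) := by
    rw [ENNReal.ofReal_sub _ (by positivity), ENNReal.ofReal_pow (by positivity),
      ENNReal.ofReal_inv_of_pos (by norm_num)]
    simp
  rw [hreal, ← ENNReal.ofReal_pow (by linarith)]
  refine ENNReal.ofReal_le_ofReal ?_
  calc (1 - (2⁻¹ : ℝ) ^ n) ^ c
      ≤ (1 - (2⁻¹ : ℝ) ^ n) ^ 2 ^ n := pow_le_pow_of_le_one (by linarith) (by simp) hc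
    _ = (1 - 1 / ((2 ^ n : ℕ) : ℝ)) ^ 2 ^ n := by simp
    _ ≤ Real.exp (-1) := Real.one_sub_div_pow_le_exp_neg (by exact_mod_cast Nat.one_le_two_pow)

/-- For infinitely many `n` there are more than `2 ^ n` independent events of probability
`2 ^ (-n)`, so almost surely one of them occurs. -/
lemma coinMeasure_setOfPred_forall_mem_eq_zero {V : ℕ → Type*} {Q : ∀ n, Finset (V n)}
    (hQ : ∃ᶠ n in atTop, 2 ^ n < (Q n).card) :
    coinMeasure ((Σ n, V n) × ℕ) {T | ∀ n, ∀ q ∈ Q n, ∃ i < n, T (⟨n, q⟩, i) = true} = 0 := by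
  have hbound (k : ℕ) :
      coinMeasure ((Σ n, V n) × ℕ) {T | ∀ n, ∀ q ∈ Q n, ∃ i < n, T (⟨n, q⟩, i) = true} ≤
        ENNReal.ofReal (Real.exp (-1)) ^ k := by
    obtain ⟨F, hF, rfl⟩ := (Nat.frequently_atTop_iff_infinite.1 hQ).exists_subset_card_eq k
    calc coinMeasure ((Σ n, V n) × ℕ) {T | ∀ n, ∀ q ∈ Q n, ∃ i < n, T (⟨n, q⟩, i) = true}
      _ ≤ coinMeasure ((Σ n, V n) × ℕ) {T | ∀ p ∈ F.sigma Q, ∃ i < p.1, T (p, i) = true} :=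
          measure_mono fun T hT p hp => hT p.1 p.2 (Finset.mem_sigma.1 hp).2
      _ = ∏ n ∈ F, (1 - (2⁻¹ : ℝ≥0∞) ^ n) ^ (Q n).card := by
          rw [coinMeasure_setOfPred_forall_exists_lt_eq_true, Finset.prod_sigma]
          simp only [Finset.prod_const]
      _ ≤ ∏ _n ∈ F, ENNReal.ofReal (Real.exp (-1)) :=
          Finset.prod_le_prod' fun n hn => one_sub_inv_two_pow_pow_le (hF hn).le
      _ = ENNReal.ofReal (Real.exp (-1)) ^ F.card := Finset.prod_const _
  have hlim : Tendsto (fun k => ENNReal.ofReal (Real.exp (-1)) ^ k) atTop (𝓝 0) := by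
    refine ENNReal.tendsto_pow_atTop_nhds_zero_of_lt_one (ENNReal.ofReal_lt_one.2 ?_)
    exact Real.exp_lt_one_iff.2 (by norm_num)
  exact le_antisymm (ge_of_tendsto' hlim hbound) bot_le

end CoinMeasure

section Cantor

lemma xorAdd_eq_symmDiff (x y : ℕ → Bool) : xorAdd x y = x ∆ y :=
  funext fun i => (Bool.symmDiff_eq_xor (x i) (y i)).symm

lemma length_seg {X : Type} (x : ℕ → X) (n : ℕ) : (seg x n).length = n := by
  simp [seg]

lemma take_seg {X : Type} (x : ℕ → X) {m n : ℕ} (h : m ≤ n) : (seg x n).take m = seg x m := by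
  simp [seg, ← List.map_take, List.take_range, h]

lemma mem_cylSet_iff_seg_eq {x : ℕ → Bool} {s : List Bool} :
    x ∈ cylSet s ↔ seg x s.length = s := by
  refine ⟨fun h => List.ext_getElem (length_seg _ _) fun i _ hi => ?_, fun h i => ?_⟩
  · simpa [seg] using h ⟨i, hi⟩
  · simp only [List.get_eq_getElem]
    conv_rhs => rw [← List.getElem_of_eq h (by simp [length_seg])]
    simp [seg]

lemma mem_cylSet_seg_iff {x y : ℕ → Bool} {n : ℕ} :
    y ∈ cylSet (seg x n) ↔ ∀ i < n, y i = x i := by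
  rw [mem_cylSet_iff_seg_eq, length_seg]
  simp [seg]

lemma isOpen_cylSet (s : List Bool) : IsOpen (cylSet s) := by
  have : cylSet s = ⋂ i : Fin s.length, (fun x : ℕ → Bool => x i) ⁻¹' {s.get i} := by
    ext x
    simp [cylSet]
  rw [this]
  exact isOpen_iInter_of_finite fun i => (isOpen_discrete _).preimage (continuous_apply _)

lemma coinMeasure_cylSet (s : List Bool) : coinMeasure ℕ (cylSet s) = 2⁻¹ ^ s.length := by
  have : cylSet s = {x | ∀ i ∈ Finset.range s.length, x i = s.getD i false} := by
    ext x
    simp +contextual [cylSet, Fin.forall_iff]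
  rw [this, coinMeasure_setOfPred_eqOn, Finset.card_range]

lemma exists_cylSet_seg_subset {U : Set (ℕ → Bool)} (hU : IsOpen U) {x : ℕ → Bool}
    (hx : x ∈ U) : ∃ n, cylSet (seg x n) ⊆ U := by
  obtain ⟨J, u, hu, hJU⟩ := isOpen_pi_iff.1 hU x hx
  refine ⟨J.sup id + 1, fun y hy => hJU fun i hi => ?_⟩
  rw [mem_cylSet_seg_iff.1 hy i (Nat.lt_succ_of_le (Finset.le_sup (f := id) hi))]
  exact (hu i hi).2

/-- The shortest words whose cylinder is contained in `U`; their cylinders partition `U` when `U`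
is open. -/
def minimalWords (U : Set (ℕ → Bool)) : Set (List Bool) :=
  {s | cylSet s ⊆ U ∧ ∀ m < s.length, ¬ cylSet (s.take m) ⊆ U}

lemma subset_iUnion_minimalWords {U : Set (ℕ → Bool)} (hU : IsOpen U) :
    U ⊆ ⋃ s ∈ minimalWords U, cylSet s := by
  classical
  intro x hx
  have h := exists_cylSet_seg_subset hU hx
  refine mem_biUnion (x := seg x (Nat.find h)) ⟨Nat.find_spec h, fun m hm => ?_⟩
    (mem_cylSet_seg_iff.2 fun _ _ => rfl)
  rw [length_seg] at hm
  rw [take_seg x hm.le]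
  exact Nat.find_min h hm

lemma pairwiseDisjoint_cylSet_minimalWords (U : Set (ℕ → Bool)) :
    (minimalWords U).PairwiseDisjoint cylSet := by
  intro s hs t ht hst
  refine Set.disjoint_left.2 fun x hxs hxt => hst ?_
  rw [mem_cylSet_iff_seg_eq] at hxs hxt
  suffices s.length = t.length by rw [← hxs, ← hxt, this]
  have not_shorter : ∀ s ∈ minimalWords U, ∀ t ∈ minimalWords U, seg x s.length = s →
      seg x t.length = t → ¬ s.length < t.length := by
    intro s hs t ht hxs hxt hlt
    apply ht.2 _ hlt
    rw [← hxt, take_seg x hlt.le, hxs]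
    exact hs.1
  exact le_antisymm (not_lt.1 (not_shorter t ht s hs hxt hxs))
    (not_lt.1 (not_shorter s hs t ht hxs hxt))

lemma tsum_minimalWords_le (U : Set (ℕ → Bool)) :
    ∑' s : minimalWords U, (2⁻¹ : ℝ≥0∞) ^ s.1.length ≤ coinMeasure ℕ U := by
  simp only [← coinMeasure_cylSet]
  rw [← measure_biUnion (to_countable _) (pairwiseDisjoint_cylSet_minimalWords U)
    fun s _ => (isOpen_cylSet s).measurableSet]
  exact measure_mono (iUnion₂_subset fun s hs => hs.1)

/-- The enumeration by `ℕ` in `IsNullCantor` is obtained by padding with very long words. -/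
lemma isNullCantor_of_countable_cover {N : Set (ℕ → Bool)}
    (h : ∀ ε : ℝ≥0∞, 0 < ε → ∃ M : Set (List Bool),
      N ⊆ ⋃ s ∈ M, cylSet s ∧ ∑' s : M, (2⁻¹ : ℝ≥0∞) ^ s.1.length ≤ ε) :
    IsNullCantor N := by
  intro ε hε
  obtain ⟨M, hNM, hM⟩ := h (ε / 2) (ENNReal.half_pos hε.ne')
  obtain ⟨k, hk⟩ := ENNReal.exists_inv_two_pow_lt (ENNReal.half_pos hε.ne').ne'
  obtain ⟨e⟩ : Nonempty (ℕ ≃ M ⊕ ℕ) := nonempty_equiv_of_countable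
  let word : M ⊕ ℕ → List Bool := Sum.elim (↑) fun n => List.replicate (n + 1 + k) false
  refine ⟨word ∘ e, fun x hx => ?_, ?_⟩
  · obtain ⟨s, hs, hxs⟩ := mem_iUnion₂.1 (hNM hx)
    exact mem_iUnion.2 ⟨e.symm (.inl ⟨s, hs⟩), by simpa [word] using hxs⟩
  have hpad : ∑' n : ℕ, (2⁻¹ : ℝ≥0∞) ^ (n + 1 + k) ≤ ε / 2 := by
    simp only [pow_add _ _ k, ENNReal.tsum_mul_right, ENNReal.tsum_geometric_add_one,
      ENNReal.one_sub_inv_two, inv_inv]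
    rw [ENNReal.inv_mul_cancel (by norm_num) (by norm_num), one_mul]
    exact hk.le
  calc ∑' n, (2⁻¹ : ℝ≥0∞) ^ (word (e n)).length
      = ∑' s : M, (2⁻¹ : ℝ≥0∞) ^ s.1.length + ∑' n : ℕ, (2⁻¹ : ℝ≥0∞) ^ (n + 1 + k) := by
        rw [e.tsum_eq fun i => (2⁻¹ : ℝ≥0∞) ^ (word i).length,
          ENNReal.summable.tsum_sum ENNReal.summable]
        simp [word]
    _ ≤ ε / 2 + ε / 2 := add_le_add hM hpad
    _ = ε := ENNReal.add_halves ε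

lemma isNullCantor_of_coinMeasure_eq_zero {N : Set (ℕ → Bool)} (hN : coinMeasure ℕ N = 0) :
    IsNullCantor N := by
  refine isNullCantor_of_countable_cover fun ε hε => ?_
  obtain ⟨U, hNU, hU, hUε⟩ := N.exists_isOpen_le_add (coinMeasure ℕ) hε.ne'
  rw [hN, zero_add] at hUε
  exact ⟨minimalWords U, hNU.trans (subset_iUnion_minimalWords hU),
    (tsum_minimalWords_le U).trans hUε⟩

lemma IsNullCantor.exists_isOpen_coinMeasure_le {N : Set (ℕ → Bool)} (hN : IsNullCantor N)
    {ε : ℝ≥0∞} (hε : 0 < ε) : ∃ U ⊇ N, IsOpen U ∧ coinMeasure ℕ U ≤ ε := by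
  obtain ⟨s, hNs, hs⟩ := hN ε hε
  refine ⟨_, hNs, isOpen_iUnion fun n => isOpen_cylSet _, (measure_iUnion_le _).trans ?_⟩
  simpa only [coinMeasure_cylSet] using hs

lemma isNullCantor_image2_xorAdd_of_mk_lt_addTNull {A N : Set (ℕ → Bool)} (hA : #A < addTNull)
    (hN : IsNullCantor N) : IsNullCantor (image2 xorAdd A N) := by
  by_contra h
  exact hA.not_ge (csInf_le' ⟨A, ⟨N, hN, h⟩, rfl⟩)

lemma exists_isOpen_image2_symmDiff_subset {ι : Type} [Countable ι] [Infinite ι]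
    {F N : Set (ι → Bool)} (hF : #F < addTNull) (hN : coinMeasure ι N = 0) {ε : ℝ≥0∞}
    (hε : 0 < ε) : ∃ U ⊇ image2 (· ∆ ·) F N, IsOpen U ∧ coinMeasure ι U ≤ ε := by
  obtain ⟨e⟩ : Nonempty (ℕ ≃ ι) := nonempty_equiv_of_countable
  have hN' : IsNullCantor ((fun x : ℕ → Bool => x ∘ e.symm) ⁻¹' N) :=
    isNullCantor_of_coinMeasure_eq_zero
      ((measurePreserving_comp_equiv e.symm).quasiMeasurePreserving.preimage_null hN)
  have hF' : #((fun x : ι → Bool => x ∘ e) '' F) < addTNull := mk_image_le.trans_lt hF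
  obtain ⟨U, hFU, hU, hUε⟩ :=
    (isNullCantor_image2_xorAdd_of_mk_lt_addTNull hF' hN').exists_isOpen_coinMeasure_le hε
  refine ⟨(fun x : ι → Bool => x ∘ e) ⁻¹' U, ?_, hU.preimage (by fun_prop), ?_⟩
  · rintro _ ⟨a, ha, z, hz, rfl⟩
    refine hFU ⟨a ∘ e, mem_image_of_mem _ ha, z ∘ e, ?_, xorAdd_eq_symmDiff _ _⟩
    simpa [Function.comp_assoc] using hz
  · rwa [(measurePreserving_comp_equiv e).measure_preimage hU.measurableSet.nullMeasurableSet]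

end Cantor

section Topology

lemma measure_support_inter_pos {X : Type*} [TopologicalSpace X] [HereditarilyLindelofSpace X]
    [MeasurableSpace X] (μ : Measure X) {V : Set X} (hV : IsOpen V)
    (h : (μ.support ∩ V).Nonempty) : 0 < μ (μ.support ∩ V) := by
  obtain ⟨z, hz, hzV⟩ := h
  rw [inter_comm, measure_inter_conull Measure.measure_compl_support]
  exact (Measure.mem_support_iff_forall z).1 hz V (hV.mem_nhds hzV)

lemma exists_mem_eventually_disjoint_of_isTopologicalBasis {X : Type*} [TopologicalSpace X]
    {ℬ : Set (Set X)} (hℬ : TopologicalSpace.IsTopologicalBasis ℬ) {K : Set X}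
    [BaireSpace K] (hK : K.Nonempty) {G : ℕ → Set X} (hG : ∀ n, IsOpen (G n))
    (h : ∀ z ∈ K, ∀ᶠ n in atTop, z ∉ G n) :
    ∃ V ∈ ℬ, (K ∩ V).Nonempty ∧ ∀ᶠ n in atTop, Disjoint (K ∩ V) (G n) := by
  have := hK.to_subtype
  let C (m : ℕ) : Set K := {z : K | ∀ n ≥ m, z.1 ∉ G n}
  have isClosed_C (m : ℕ) : IsClosed (C m) := by
    simp only [C, ofPred_forall]
    exact isClosed_biInter fun n _ => (hG n).isClosed_compl.preimage continuous_subtype_val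
  have iUnion_C : ⋃ m, C m = Set.univ :=
    eq_univ_of_forall fun z => mem_iUnion.2 (eventually_atTop.1 (h z z.2))
  obtain ⟨m, z, hz⟩ := nonempty_interior_of_iUnion_of_closed isClosed_C iUnion_C
  obtain ⟨O, hO, hOC⟩ := isOpen_induced_iff.1 (isOpen_interior (s := C m))
  have hzO : z.1 ∈ O := by rwa [← hOC] at hz
  obtain ⟨V, hV, hzV, hVO⟩ := hℬ.exists_subset_of_mem_open hzO hO
  refine ⟨V, hV, ⟨z, z.2, hzV⟩, eventually_atTop.2 ⟨m, fun n hn => ?_⟩⟩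
  refine disjoint_left.2 fun y hy => ?_
  have hyC : (⟨y, hy.1⟩ : K) ∈ interior (C m) := hOC ▸ hVO hy.2
  exact interior_subset hyC n hn

lemma continuous_apply_of_isLocallyConstant {ι X : Type*} [TopologicalSpace X]
    {g : (ι → X) → ι} (hg : IsLocallyConstant g) : Continuous fun z : ι → X => z (g z) := by
  refine continuous_iff_continuousAt.2 fun z => ?_
  refine (continuous_apply (g z)).continuousAt.congr ?_
  exact (hg.eventually_eq z).mono fun w hw => congrArg w hw.symm

end Topology

section Slalom

variable {α : Type}

/-- The positions of a table having, for every `n` and every word over `W n`, an infinite row of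
bits. -/
abbrev TableIndex (W : ℕ → Finset α) : Type := (Σ n, (W n → Bool)) × ℕ

variable (W : ℕ → Finset α)

/-- A point of `α ⊕ TableIndex W → Bool` is a pair of some `x : α → Bool` and a table. It belongs to
`blankAt W n s` if the first `n` entries vanish in the row of the word `(x ↾ W n) + s`. Shifting
the row by `x` makes translations of `x` act on these sets by translating `s`. -/
def blankAt (n : ℕ) (s : W n → Bool) : Set (α ⊕ TableIndex W → Bool) :=
  {z | ∀ i < n, z (.inr (⟨n, (W n).restrict (z ∘ .inl) ∆ s⟩, i)) = false}

lemma isClopen_blankAt (n : ℕ) (s : W n → Bool) : IsClopen (blankAt W n s) := by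
  have hrow : IsLocallyConstant fun z : α ⊕ TableIndex W → Bool =>
      (W n).restrict (z ∘ Sum.inl) ∆ s := by
    refine IsLocallyConstant.comp (f := fun z => (W n).restrict (z ∘ Sum.inl)) ?_ (· ∆ s)
    refine (IsLocallyConstant.iff_continuous _).2 ?_
    exact (Finset.continuous_restrict _).comp (by fun_prop)
  simp only [blankAt, ofPred_forall]
  refine (finite_lt_nat n).isClopen_biInter fun i _ => ?_
  have hentry := hrow.comp fun q => (Sum.inr (⟨n, q⟩, i) : α ⊕ TableIndex W)
  exact (isClopen_discrete {false}).preimage (continuous_apply_of_isLocallyConstant hentry)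

lemma sumElim_symmDiff_mem_blankAt_iff {n : ℕ} {a : α → Bool} {z : α ⊕ TableIndex W → Bool} :
    Sum.elim a ⊥ ∆ z ∈ blankAt W n ⊥ ↔ z ∈ blankAt W n ((W n).restrict a) := by
  have hword : (W n).restrict ((Sum.elim a ⊥ ∆ z) ∘ Sum.inl) ∆ ⊥ =
      (W n).restrict (z ∘ Sum.inl) ∆ (W n).restrict a := by
    rw [symmDiff_bot, symmDiff_comm ((W n).restrict _)]
    rfl
  simp [blankAt, hword, -symmDiff_bot]

lemma coinMeasure_setOfPred_sumElim_mem_blankAt (n : ℕ) (s : W n → Bool) (x : α → Bool) :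
    coinMeasure (TableIndex W) {T | Sum.elim x T ∈ blankAt W n s} = 2⁻¹ ^ n := by
  have hset : {T : TableIndex W → Bool | Sum.elim x T ∈ blankAt W n s} =
      {T | ∀ p ∈ (Finset.range n).map (.sectR ⟨n, (W n).restrict x ∆ s⟩ ℕ), T p = false} := by
    ext T
    simp [blankAt, Function.comp_def]
  rw [hset, coinMeasure_setOfPred_eqOn _ fun _ => false, Finset.card_map, Finset.card_range]

lemma coinMeasure_setOfPred_frequently_mem_blankAt_eq_zero [Countable α] (s : ∀ n, W n → Bool) :
    coinMeasure (α ⊕ TableIndex W) {z | ∃ᶠ n in atTop, z ∈ blankAt W n (s n)} = 0 := by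
  simp only [← mem_limsup_iff_frequently_mem, ofPred_mem_eq]
  refine coinMeasure_sum_eq_zero
    (.measurableSet_limsup fun n => (isClopen_blankAt W n _).isOpen.measurableSet) fun x => ?_
  simp only [mem_limsup_iff_frequently_mem]
  refine measure_setOfPred_frequently_eq_zero ?_
  simp [coinMeasure_setOfPred_sumElim_mem_blankAt, ENNReal.tsum_geometric]

open Classical in
/-- The words `s` over `W n` such that no point of `K` lies in `blankAt W n s`. -/
def avoidedWords (K : Set (α ⊕ TableIndex W → Bool)) (n : ℕ) : Finset (W n → Bool) :=
  Finset.univ.filter fun s => Disjoint K (blankAt W n s)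

variable {W}

lemma mem_avoidedWords_iff {K : Set (α ⊕ TableIndex W → Bool)} {n : ℕ} {s : W n → Bool} :
    s ∈ avoidedWords W K n ↔ Disjoint K (blankAt W n s) := by
  simp [avoidedWords]

lemma eventually_card_avoidedWords_le [Countable α] {K : Set (α ⊕ TableIndex W → Bool)}
    (hK : coinMeasure _ K ≠ 0) : ∀ᶠ n in atTop, (avoidedWords W K n).card ≤ 2 ^ n := by
  classical
  contrapose! hK
  let D : Set (α ⊕ TableIndex W → Bool) := ⋂ n, ⋂ s ∈ avoidedWords W K n, (blankAt W n s)ᶜ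
  have hKD : K ⊆ D := subset_iInter₂ fun n s => subset_iInter fun hs =>
    (mem_avoidedWords_iff.1 hs).subset_compl_right
  refine measure_mono_null hKD (coinMeasure_sum_eq_zero ?_ fun x => ?_)
  · exact .iInter fun n => .iInter fun s => .iInter fun _ =>
      (isClopen_blankAt W n s).isOpen.measurableSet.compl
  let Q (n : ℕ) : Finset (W n → Bool) :=
    (avoidedWords W K n).image ((W n).restrict x ∆ ·)
  have hQ : ∃ᶠ n in atTop, 2 ^ n < (Q n).card := by
    simpa only [Q, Finset.card_image_of_injective _ (symmDiff_right_injective _)] using hK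
  refine measure_mono_null (fun T hT => ?_) (coinMeasure_setOfPred_forall_mem_eq_zero hQ)
  simpa [D, Q, blankAt, Function.comp_def] using hT

theorem exists_countable_eventually_restrict_mem_of_mk_lt_addTNull [Countable α]
    (W : ℕ → Finset α) {F : Set (α → Bool)} (hF : #F < addTNull) :
    ∃ 𝒮 : Set (∀ n, Finset (W n → Bool)), 𝒮.Countable ∧
      (∀ S ∈ 𝒮, ∀ᶠ n in atTop, (S n).card ≤ 2 ^ n) ∧
      ∀ a ∈ F, ∃ S ∈ 𝒮, ∀ᶠ n in atTop, (W n).restrict a ∈ S n := by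
  have hF' : #((fun a => Sum.elim a ⊥ : _ → α ⊕ TableIndex W → Bool) '' F) < addTNull :=
    mk_image_le.trans_lt hF
  obtain ⟨U, hFU, hU, hU_le⟩ := exists_isOpen_image2_symmDiff_subset hF'
    (coinMeasure_setOfPred_frequently_mem_blankAt_eq_zero W fun _ => ⊥) (ε := 2⁻¹) (by simp)
  let ν := (coinMeasure (α ⊕ TableIndex W)).restrict Uᶜ
  have hνU : ν.support ⊆ Uᶜ := by
    exact Measure.support_restrict_subset.trans (inter_subset_left.trans_eq
      hU.isClosed_compl.closure_eq)
  have hν : ν ≠ 0 := by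
    rw [Ne, Measure.restrict_eq_zero, prob_compl_eq_zero_iff hU.measurableSet]
    rintro h
    simp [h] at hU_le
  let ℬ := TopologicalSpace.countableBasis (α ⊕ TableIndex W → Bool)
  have hℬ : TopologicalSpace.IsTopologicalBasis ℬ := TopologicalSpace.isBasis_countableBasis _
  refine ⟨(fun V => avoidedWords W (ν.support ∩ V)) '' {V ∈ ℬ | (ν.support ∩ V).Nonempty},
    ((TopologicalSpace.countable_countableBasis _).mono (sep_subset _ _)).image _, ?_, ?_⟩
  · rintro _ ⟨V, ⟨hV, hne⟩, rfl⟩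
    have hpos := measure_support_inter_pos ν (hℬ.isOpen hV) hne
    exact eventually_card_avoidedWords_le (hpos.trans_le (Measure.restrict_apply_le _ _)).ne'
  · intro a ha
    have hlim : ∀ z ∈ ν.support, ∀ᶠ n in atTop, z ∉ blankAt W n ((W n).restrict a) := by
      intro z hz
      by_contra hfreq
      refine hνU hz (hFU ⟨_, mem_image_of_mem _ ha, Sum.elim a ⊥ ∆ z, ?_,
        symmDiff_symmDiff_cancel_left _ _⟩)
      refine (not_eventually.1 hfreq).mono fun n hn => ?_
      exact (sumElim_symmDiff_mem_blankAt_iff W).2 (not_not.1 hn)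
    have : CompactSpace ν.support := isCompact_iff_compactSpace.1 Measure.isClosed_support.isCompact
    obtain ⟨V, hV, hne, hdisj⟩ := exists_mem_eventually_disjoint_of_isTopologicalBasis hℬ
      (Measure.nonempty_support hν) (fun n => (isClopen_blankAt W n _).isOpen) hlim
    exact ⟨_, ⟨V, ⟨hV, hne⟩, rfl⟩, hdisj.mono fun n hn => mem_avoidedWords_iff.2 hn⟩

theorem exists_countable_eventually_inter_mem_of_mk_lt_addTNull [Countable α]
    (W : ℕ → Finset α) {𝒜 : Set (Set α)} (h𝒜 : #𝒜 < addTNull) :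
    ∃ 𝒮 : Set (ℕ → Finset (Set α)), 𝒮.Countable ∧
      (∀ S ∈ 𝒮, ∀ᶠ n in atTop, (S n).card ≤ 2 ^ n) ∧
      ∀ A ∈ 𝒜, ∃ S ∈ 𝒮, ∀ᶠ n in atTop, A ∩ W n ∈ S n := by
  classical
  let toSet (n : ℕ) (q : W n → Bool) : Set α := {x | ∃ h : x ∈ W n, q ⟨x, h⟩ = true}
  have toSet_restrict (A : Set α) (n : ℕ) :
      toSet n ((W n).restrict A.boolIndicator) = A ∩ W n := by
    ext x
    simp [toSet, boolIndicator, and_comm]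
  have hF : #(boolIndicator '' 𝒜) < addTNull := mk_image_le.trans_lt h𝒜
  obtain ⟨𝒮, h𝒮, hcard, hmem⟩ := exists_countable_eventually_restrict_mem_of_mk_lt_addTNull W hF
  refine ⟨(fun S n => (S n).image (toSet n)) '' 𝒮, h𝒮.image _, ?_, fun A hA => ?_⟩
  · rintro _ ⟨S, hS, rfl⟩
    exact (hcard S hS).mono fun n hn => Finset.card_image_le.trans hn
  · obtain ⟨S, hS, hAS⟩ := hmem _ (mem_image_of_mem _ hA)
    refine ⟨_, mem_image_of_mem _ hS, hAS.mono fun n hn => ?_⟩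
    exact toSet_restrict A n ▸ Finset.mem_image_of_mem _ hn

end Slalom

section Fragmented

variable {X : Type}

lemma exists_tendsto_atTop_eventually_diagonal {Q : ℕ → ℕ → Prop}
    (h : ∀ n, ∀ᶠ j in atTop, Q n j) :
    ∃ g : ℕ → ℕ, Tendsto g atTop atTop ∧ ∀ᶠ j in atTop, Q (g j) j := by
  classical
  refine ⟨fun j => Nat.findGreatest (Q · j) j, tendsto_atTop.2 fun n => ?_, ?_⟩
  · filter_upwards [h n, eventually_ge_atTop n] with j hj hnj
    exact Nat.le_findGreatest hnj hj
  · filter_upwards [h 0] with j hj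
    exact Nat.findGreatest_spec (P := (Q · j)) (Nat.zero_le j) hj

lemma exists_countable_eventually_inter_mem_of_tendsto [Countable X] {P : ℕ → Set X}
    (hP : ∀ j, (P j).Finite) {g : ℕ → ℕ} (hg : Tendsto g atTop atTop) {𝒜 : Set (Set X)}
    (h𝒜 : #𝒜 < addTNull) :
    ∃ 𝒮 : Set (ℕ → Finset (Set X)), 𝒮.Countable ∧
      (∀ S ∈ 𝒮, ∀ᶠ j in atTop, (S j).card ≤ 2 ^ g j) ∧
      ∀ A ∈ 𝒜, ∃ S ∈ 𝒮, ∀ᶠ j in atTop, A ∩ P j ∈ S j := by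
  classical
  have hfin (n : ℕ) : (⋃ j ∈ {j | g j = n}, P j).Finite := by
    refine Finite.biUnion ?_ fun j _ => hP j
    simpa [← Nat.cofinite_eq_atTop, eventually_cofinite] using hg.eventually_ne_atTop n
  obtain ⟨𝒮, h𝒮, hcard, hmem⟩ :=
    exists_countable_eventually_inter_mem_of_mk_lt_addTNull (fun n => (hfin n).toFinset) h𝒜
  refine ⟨(fun S j => (S (g j)).image (· ∩ P j)) '' 𝒮, h𝒮.image _, ?_, fun A hA => ?_⟩
  · rintro _ ⟨S, hS, rfl⟩
    exact (hg.eventually (hcard S hS)).mono fun j hj => Finset.card_image_le.trans hj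
  · obtain ⟨S, hS, hAS⟩ := hmem A hA
    refine ⟨_, mem_image_of_mem _ hS, (hg.eventually hAS).mono fun j hj => ?_⟩
    have hPj : P j ⊆ (hfin (g j)).toFinset := by
      rw [Finite.coe_toFinset]
      exact subset_biUnion_of_mem (u := P) (rfl : g j = g j)
    exact Finset.mem_image.2 ⟨_, hj, by rw [inter_assoc, inter_eq_right.2 hPj]⟩

lemma alSub_of_eventually_inter_subset {P : ℕ → Set X} (hP : ∀ j, (P j).Finite)
    (hcover : ⋃ j, P j = Set.univ) {A B : Set X} (h : ∀ᶠ j in atTop, A ∩ P j ⊆ B) :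
    AlSub A B := by
  obtain ⟨m, hm⟩ := eventually_atTop.1 h
  refine ((finite_lt_nat m).biUnion fun j _ => hP j).subset fun x ⟨hxA, hxB⟩ => ?_
  obtain ⟨j, hj⟩ := mem_iUnion.1 (hcover ▸ mem_univ x)
  exact mem_biUnion (not_le.1 fun hmj => hxB (hm j hmj ⟨hxA, hj⟩)) hj

/-- Any at most `i` subsets of `Q` with `ψ`-value at most `a` have a union with `ψ`-value at most
`b`: the condition on the submeasures in the definition of a gradually fragmented ideal. -/
def UnionBounded (ψ : Set X → ℝ≥0∞) (Q : Set X) (i : ℕ) (a b : ℝ≥0∞) : Prop :=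
  ∀ ℬ : Finset (Set X), ℬ.card ≤ i → (∀ B ∈ ℬ, B ⊆ Q) → (∀ B ∈ ℬ, ψ B ≤ a) →
    ψ (⋃ B ∈ ℬ, B) ≤ b

variable {I : Set (Set X)} {P : ℕ → Set X} {φ : ℕ → Set X → ℝ≥0∞}

lemma exists_mem_eventually_subset_of_eventually_le (hP : Pairwise (Disjoint on P))
    (hφ : ∀ j, φ j ∅ = 0) (hI : ∀ A, ⨆ j, φ j (A ∩ P j) < ⊤ → A ∈ I) {C : ℕ → Set X}
    (hCP : ∀ j, C j ⊆ P j) {b : ℝ≥0∞} (hb : b < ⊤) (hC : ∀ᶠ j in atTop, φ j (C j) ≤ b) :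
    ∃ B ∈ I, ∀ᶠ j in atTop, C j ⊆ B := by
  obtain ⟨m, hm⟩ := eventually_atTop.1 hC
  refine ⟨⋃ k ≥ m, C k, hI _ ((iSup_le fun j => ?_).trans_lt hb),
    eventually_atTop.2 ⟨m, fun j hj => subset_biUnion_of_mem (u := C) hj⟩⟩
  have mem_iff {x : X} (hx : x ∈ P j) : x ∈ ⋃ k ≥ m, C k ↔ m ≤ j ∧ x ∈ C j := by
    simp only [mem_iUnion, exists_prop]
    refine ⟨fun ⟨k, hk, hxk⟩ => ?_, fun h => ⟨j, h⟩⟩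
    obtain rfl := hP.eq (not_disjoint_iff.2 ⟨x, hCP k hxk, hx⟩)
    exact ⟨hk, hxk⟩
  by_cases hj : m ≤ j
  · have hinter : (⋃ k ≥ m, C k) ∩ P j = C j := by
      ext x
      exact ⟨fun h => ((mem_iff h.2).1 h.1).2, fun h => ⟨(mem_iff (hCP j h)).2 ⟨hj, h⟩, hCP j h⟩⟩
    exact hinter ▸ hm j hj
  · have hinter : (⋃ k ≥ m, C k) ∩ P j = ∅ :=
      eq_empty_of_forall_notMem fun x h => hj ((mem_iff h.2).1 h.1).1
    simp [hinter, hφ]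

lemma exists_mem_alSub_of_eventually_unionBounded (hPfin : ∀ j, (P j).Finite)
    (hP : Pairwise (Disjoint on P)) (hcover : ⋃ j, P j = Set.univ)
    (hφ : ∀ j, φ j ∅ = 0) (hI : ∀ A, ⨆ j, φ j (A ∩ P j) < ⊤ → A ∈ I)
    (S : ℕ → Finset (Set X)) {a b : ℝ≥0∞} (hb : b < ⊤)
    (hS : ∀ᶠ j in atTop, UnionBounded (φ j) (P j) (S j).card a b) :
    ∃ B ∈ I, ∀ A, (∀ j, φ j (A ∩ P j) ≤ a) → (∀ᶠ j in atTop, A ∩ P j ∈ S j) → AlSub A B := by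
  classical
  let small (j : ℕ) : Finset (Set X) := (S j).filter fun B => B ⊆ P j ∧ φ j B ≤ a
  have mem_small {j : ℕ} {B : Set X} : B ∈ small j ↔ B ∈ S j ∧ B ⊆ P j ∧ φ j B ≤ a :=
    Finset.mem_filter
  obtain ⟨B, hB, hsub⟩ := exists_mem_eventually_subset_of_eventually_le hP hφ hI
    (C := fun j => ⋃ B ∈ small j, B) (fun j => iUnion₂_subset fun B hB => (mem_small.1 hB).2.1) hb
    (hS.mono fun j hj => hj _ (Finset.card_filter_le _ _) (fun B hB => (mem_small.1 hB).2.1)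
      fun B hB => (mem_small.1 hB).2.2)
  refine ⟨B, hB, fun A hA hAS => alSub_of_eventually_inter_subset hPfin hcover ?_⟩
  filter_upwards [hsub, hAS] with j hj hAj
  exact (subset_biUnion_of_mem (u := id) (mem_small.2 ⟨hAj, inter_subset_right, hA j⟩)).trans hj

theorem GraduallyFragmented.exists_countable_forall_exists_alSub {I : Set (Set ℕ)}
    (hGF : GraduallyFragmented I) {𝒜 : Set (Set ℕ)} (h𝒜I : 𝒜 ⊆ I) (h𝒜 : #𝒜 < addTNull) :
    ∃ 𝒞 ⊆ I, 𝒞.Countable ∧ ∀ A ∈ 𝒜, ∃ B ∈ 𝒞, AlSub A B := by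
  obtain ⟨P, φ, f, hPfin, -, hP, hcover, hφ, hI, hgrad⟩ := hGF
  obtain ⟨g, hg, hbounded⟩ : ∃ g : ℕ → ℕ, Tendsto g atTop atTop ∧ ∀ᶠ j in atTop,
      ∀ k ∈ Iic (g j), UnionBounded (φ j) (P j) (2 ^ g j) k (f k) :=
    exists_tendsto_atTop_eventually_diagonal fun n =>
      (eventually_all_finite (finite_Iic n)).2 fun k _ => hgrad k (2 ^ n)
  obtain ⟨𝒮, h𝒮, hcard, hmem⟩ := exists_countable_eventually_inter_mem_of_tendsto hPfin hg h𝒜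
  have hcapture (S : 𝒮) (k : ℕ) : ∃ B ∈ I, ∀ A, (∀ j, φ j (A ∩ P j) ≤ k) →
      (∀ᶠ j in atTop, A ∩ P j ∈ S.1 j) → AlSub A B := by
    refine exists_mem_alSub_of_eventually_unionBounded hPfin (fun i j => hP i j) hcover
      (fun j => (hφ j).1) (fun A => (hI A).2) S (ENNReal.natCast_lt_top (f k)) ?_
    filter_upwards [hbounded, hg.eventually_ge_atTop k, hcard S S.2] with j hj hk hS ℬ hℬ
    exact hj k hk ℬ (hℬ.trans hS)
  choose B hBI hB using hcapture
  have := h𝒮.to_subtype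
  refine ⟨range fun p : 𝒮 × ℕ => B p.1 p.2, range_subset_iff.2 fun p => hBI _ _,
    countable_range _, fun A hA => ?_⟩
  obtain ⟨k, hk⟩ := ENNReal.exists_nat_gt ((hI A).1 (h𝒜I hA)).ne
  obtain ⟨S, hS, hAS⟩ := hmem A hA
  exact ⟨_, mem_range_self (⟨S, hS⟩, k), hB _ k A (fun j => (le_iSup _ j).trans hk.le) hAS⟩

end Fragmented

/-- For every gradually fragmented ideal `I` on `ω`,
`add*_ω(I) ≥ add_t(𝒩)`: every witnessing family for `add*_ω(I)` has size at least
`add_t(𝒩)` (this renders the inequality correctly also when `add*_ω(I) = ∞`). -/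
theorem stmt8 (I : Set (Set ℕ)) (hI : IsIdealOn I) (hGF : GraduallyFragmented I) :
    ∀ c ∈ addStarOmegaFam I, addTNull ≤ c := by
  rintro c ⟨𝒜, h𝒜I, hunbounded, rfl⟩
  by_contra! h𝒜
  obtain ⟨𝒞, h𝒞I, h𝒞, hbounded⟩ := hGF.exists_countable_forall_exists_alSub h𝒜I h𝒜
  obtain ⟨B, hB⟩ := (h𝒞.insert ∅).exists_eq_range (insert_nonempty _ _)
  have hBI : range B ⊆ I := hB ▸ insert_subset (hI.finite_mem finite_empty) h𝒞I
  obtain ⟨A, hA, hAB⟩ := hunbounded B (range_subset_iff.1 hBI)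
  obtain ⟨C, hC, hAC⟩ := hbounded A hA
  obtain ⟨n, rfl⟩ : C ∈ range B := hB ▸ mem_insert_of_mem ∅ hC
  exact hAB n hAC

end
end

section
/- non*_ω(𝒮) = cov_ω(𝒩), where 𝒮 is the Solecki ideal: the least cardinality of a family 𝒜 of infinite subsets of Ω such that every countable subfamily of 𝒮 is almost avoided by a single member of 𝒜 equals the least cardinality of a family of null sets of reals such that every countable set of reals is contained in one of them. -/
open Cardinal Filter Set
open scoped ENNReal

noncomputable section

/-!
Both inequalities are Tukey reductions, and both rest on the fact that an atomless σ-finite measure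
on a standard Borel space can be mapped onto any other one without pulling null sets back to
non-null ones, so that `ℝ`, `2^ω` and `(2^ω)^ω` may be interchanged.

For an infinite family `A ⊆ Ω` let `L_A` be the set of points of `2^ω` that lie in only finitely
many members of `A`. Up to the choice of countably many generators, `A` almost avoids every member
of a countable subfamily of `𝒮` if and only if `L_A` contains a prescribed countable set.

Every null set is contained in some `L_A`: cover it by an open set `U` of measure less than `1/2`
and let `A` consist of the clopen sets of measure `1/2` avoiding the level-`n` approximation of `U`
from inside, where `n` is a level at which they are determined. This gives
`non*_ω(𝒮) ≤ cov_ω(𝒩)`. Conversely, `L_A` is the lower limit of the complements of the members of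
`A`, so it has measure at most `1/2`; it need not be null, but its infinite power in `(2^ω)^ω` is,
and a countable subset of `(2^ω)^ω` has only countably many coordinates. This gives
`cov_ω(𝒩) ≤ non*_ω(𝒮)`.
-/

section GaloisTukey

universe u

variable {X X' : Type*} {Y Y' : Type u}

/-- The norm of the relational system `(S, T, R)`: the least cardinality of a family of elements
of `T` such that every element of `S` is `R`-related to a member of the family. It has the junk
value `0` if there is no such family. -/
def dominatingNumber (S : Set X) (T : Set Y) (R : X → Y → Prop) : Cardinal.{u} :=
  sInf {c | ∃ 𝒜 : Set Y, (∀ y ∈ 𝒜, y ∈ T) ∧ (∀ x ∈ S, ∃ y ∈ 𝒜, R x y) ∧ #𝒜 = c}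

theorem dominatingNumber_le_of_tukey {S : Set X} {T : Set Y} {R : X → Y → Prop}
    {S' : Set X'} {T' : Set Y'} {R' : X' → Y' → Prop}
    (hne : ∀ x' ∈ S', ∃ y' ∈ T', R' x' y') {ψ : Y' → Y} (hψ : MapsTo ψ T' T)
    (hφ : ∀ x ∈ S, ∃ x' ∈ S', ∀ y' ∈ T', R' x' y' → R x (ψ y')) :
    dominatingNumber S T R ≤ dominatingNumber S' T' R' := by
  refine le_csInf ⟨#T', T', fun _ h ↦ h, hne, rfl⟩ ?_
  rintro _ ⟨𝒜, h𝒜, hdom, rfl⟩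
  have himage : dominatingNumber S T R ≤ #(ψ '' 𝒜) := by
    refine csInf_le' ⟨ψ '' 𝒜, forall_mem_image.2 fun y' hy' ↦ hψ (h𝒜 y' hy'), fun x hx ↦ ?_, rfl⟩
    obtain ⟨x', hx', h⟩ := hφ x hx
    obtain ⟨y', hy', hR⟩ := hdom x' hx'
    exact ⟨ψ y', mem_image_of_mem ψ hy', h y' (h𝒜 y' hy') hR⟩
  exact himage.trans mk_image_le

theorem sInf_nonStarOmegaFam_eq_dominatingNumber {X : Type} (I : Set (Set X)) :
    sInf (nonStarOmegaFam I) = dominatingNumber {B : ℕ → Set X | ∀ n, B n ∈ I}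
      {A : Set X | A.Infinite} fun B A ↦ ∀ n, (A ∩ B n).Finite :=
  rfl

theorem covOmegaNull_eq_dominatingNumber :
    covOmegaNull = dominatingNumber {B : Set ℝ | B.Countable}
      {N : Set ℝ | MeasureTheory.volume N = 0} (· ⊆ ·) :=
  rfl

end GaloisTukey

section AtomlessMeasure

open MeasureTheory ProbabilityTheory Topology

section Real

variable (μ : Measure ℝ) [IsProbabilityMeasure μ] [NullSingletonClass μ]

theorem continuous_cdf : Continuous (cdf μ) := by
  refine continuous_iff_continuousAt.2 fun x ↦ ?_
  rw [(monotone_cdf μ).continuousAt_iff_leftLim_eq_rightLim, StieltjesFunction.rightLim_eq]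
  refine ((monotone_cdf μ).leftLim_le le_rfl).antisymm ?_
  have hx : ENNReal.ofReal (cdf μ x - Function.leftLim (cdf μ) x) = 0 := by
    rw [← StieltjesFunction.measure_singleton, measure_cdf, measure_singleton]
  linarith [ENNReal.ofReal_eq_zero.1 hx]

theorem exists_cdf_eq {t : ℝ} (ht : t ∈ Ioo 0 1) : ∃ x, cdf μ x = t :=
  mem_range_of_exists_le_of_exists_ge (continuous_cdf μ)
    (((tendsto_cdf_atBot μ).eventually_lt_const ht.1).exists.imp fun _ ↦ le_of_lt)
    (((tendsto_cdf_atTop μ).eventually_const_lt ht.2).exists.imp fun _ ↦ le_of_lt)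

theorem measure_cdf_lt_le (t : ℝ) : μ {x | cdf μ x < t} ≤ ENNReal.ofReal t := by
  rcases le_or_gt t 0 with ht₀ | ht₀
  · have hempty : {x | cdf μ x < t} = ∅ :=
      eq_empty_of_forall_notMem fun x hx ↦ (ht₀.trans (cdf_nonneg μ x)).not_gt hx
    simp only [hempty, measure_empty, zero_le]
  rcases le_or_gt 1 t with ht₁ | ht₁
  · exact prob_le_one.trans (ENNReal.one_le_ofReal.2 ht₁)
  obtain ⟨x, rfl⟩ := exists_cdf_eq μ ⟨ht₀, ht₁⟩
  rw [ofReal_cdf]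
  exact measure_mono fun y hy ↦ ((monotone_cdf μ).reflect_lt hy).le

theorem measure_cdf_le {t : ℝ} (ht : t ∈ Icc 0 1) : μ {x | cdf μ x ≤ t} = ENNReal.ofReal t := by
  apply le_antisymm
  · refine ge_of_tendsto (x := 𝓝[>] t)
      (ENNReal.continuous_ofReal.continuousWithinAt (x := t)) ?_
    filter_upwards [self_mem_nhdsWithin] with s hs
    exact (measure_mono fun x (hx : cdf μ x ≤ t) ↦ hx.trans_lt hs).trans (measure_cdf_lt_le μ s)
  · rcases ht.1.eq_or_lt with rfl | ht₀
    · simp only [ENNReal.ofReal_zero, zero_le]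
    rcases ht.2.eq_or_lt with rfl | ht₁
    · simp only [cdf_le_one, ofPred_true, measure_univ, ENNReal.ofReal_one, le_refl]
    obtain ⟨x, rfl⟩ := exists_cdf_eq μ ⟨ht₀, ht₁⟩
    rw [ofReal_cdf]
    exact measure_mono fun y hy ↦ monotone_cdf μ hy

theorem exists_measurable_map_real_eq_volume :
    ∃ g : ℝ → unitInterval, Measurable g ∧ μ.map g = volume := by
  have hg : Measurable fun x ↦ (⟨cdf μ x, cdf_nonneg μ x, cdf_le_one μ x⟩ : unitInterval) :=
    (monotone_cdf μ).measurable.subtype_mk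
  refine ⟨_, hg, ?_⟩
  have := Measure.isProbabilityMeasure_map (μ := μ) hg.aemeasurable
  refine Measure.ext_of_Iic _ _ fun t ↦ ?_
  rw [Measure.map_apply hg measurableSet_Iic, unitInterval.volume_Iic]
  exact measure_cdf_le μ t.2

end Real

variable {X Y : Type*} [MeasurableSpace X] [StandardBorelSpace X]
  [MeasurableSpace Y] [StandardBorelSpace Y]

theorem exists_measurable_map_eq_volume (μ : Measure X) [IsProbabilityMeasure μ]
    [NullSingletonClass μ] : ∃ g : X → unitInterval, Measurable g ∧ μ.map g = volume := by
  have he := measurableEmbedding_embeddingReal X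
  have := Measure.isProbabilityMeasure_map (μ := μ) he.measurable.aemeasurable
  have : NullSingletonClass (μ.map (embeddingReal X)) :=
    ⟨fun r ↦ by
      rw [he.map_apply]
      exact (subsingleton_singleton.preimage he.injective).measure_zero μ⟩
  obtain ⟨g, hg, hmap⟩ := exists_measurable_map_real_eq_volume (μ.map (embeddingReal X))
  exact ⟨g ∘ embeddingReal X, hg.comp he.measurable,
    (Measure.map_map hg he.measurable).symm.trans hmap⟩

theorem exists_measurePreserving (μ : Measure X) [IsProbabilityMeasure μ] [NullSingletonClass μ]
    (ν : Measure Y) [IsProbabilityMeasure ν] : ∃ f : X → Y, MeasurePreserving f μ ν := by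
  have := nonempty_of_isProbabilityMeasure ν
  obtain ⟨g, hg, hμ⟩ := exists_measurable_map_eq_volume μ
  obtain ⟨h, hh, hν⟩ := ν.exists_measurable_map_eq
  exact ⟨h ∘ g, (MeasurePreserving.mk hh hν).comp ⟨hg, hμ⟩⟩

theorem exists_quasiMeasurePreserving (μ : Measure X) [SFinite μ] [NeZero μ]
    [NullSingletonClass μ] (ν : Measure Y) [SFinite ν] [NeZero ν] :
    ∃ f : X → Y, Measure.QuasiMeasurePreserving f μ ν := by
  have : NullSingletonClass μ.toFinite :=
    ⟨fun x ↦ toFinite_absolutelyContinuous μ (measure_singleton x)⟩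
  obtain ⟨f, hf⟩ := exists_measurePreserving μ.toFinite ν.toFinite
  exact ⟨f, hf.quasiMeasurePreserving.mono (absolutelyContinuous_toFinite μ)
    (toFinite_absolutelyContinuous ν)⟩

end AtomlessMeasure

section InfiniteProduct

open MeasureTheory

variable {ι : Type*} [Infinite ι]

theorem infinitePi_univ_pi_eq_zero {X : ι → Type*} [∀ i, MeasurableSpace (X i)]
    {μ : ∀ i, Measure (X i)} [∀ i, IsProbabilityMeasure (μ i)] {s : ∀ i, Set (X i)} {c : ℝ≥0∞}
    (hc : c < 1) (hs : ∀ i, μ i (s i) ≤ c) : Measure.infinitePi μ (univ.pi s) = 0 := by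
  refine nonpos_iff_eq_zero.1 (ge_of_tendsto'
    (ENNReal.tendsto_pow_atTop_nhds_zero_of_lt_one hc) fun n ↦ ?_)
  obtain ⟨F, hF⟩ := Infinite.exists_subset_card_eq ι n
  calc Measure.infinitePi μ (univ.pi s)
      ≤ Measure.infinitePi μ ((F : Set ι).pi fun i ↦ toMeasurable (μ i) (s i)) :=
        measure_mono fun x hx i _ ↦ subset_toMeasurable _ _ (hx i (mem_univ i))
    _ = ∏ i ∈ F, μ i (s i) := by
        simp only [Measure.infinitePi_pi μ fun i _ ↦ measurableSet_toMeasurable (μ i) (s i),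
          measure_toMeasurable]
    _ ≤ c ^ n := hF ▸ Finset.prod_le_pow_card F _ c fun i _ ↦ hs i

theorem measure_liminf_cofinite_le {X : Type*} [MeasurableSpace X] {μ : Measure X}
    {s : ι → Set X} {c : ℝ≥0∞} (hs : ∀ i, μ (s i) ≤ c) : μ (liminf s cofinite) ≤ c := by
  let e := Infinite.natEmbedding ι
  have hsubseq : liminf s cofinite ≤ liminf (s ∘ e) atTop := by
    rw [← Nat.cofinite_eq_atTop]
    exact e.injective.tendsto_cofinite.liminf_le_liminf_comp
  have hmono : Monotone fun n ↦ ⋂ i ≥ n, s (e i) := fun m n hmn ↦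
    biInter_subset_biInter_left fun i hi ↦ hmn.trans hi
  calc μ (liminf s cofinite)
      ≤ μ (⋃ n, ⋂ i ≥ n, s (e i)) := measure_mono (hsubseq.trans_eq liminf_eq_iSup_iInf_of_nat)
    _ = ⨆ n, μ (⋂ i ≥ n, s (e i)) := hmono.measure_iUnion
    _ ≤ c := iSup_le fun n ↦ (measure_mono (biInter_subset_of_mem le_rfl)).trans (hs (e n))

end InfiniteProduct

section CantorMeasure

open MeasureTheory ProbabilityTheory

/-- The uniform product measure (coin-flipping measure) on `2^ω`. -/
def cantorMeasure : Measure (ℕ → Bool) :=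
  Measure.infinitePi fun _ ↦ uniformOn (univ : Set Bool)

instance : IsProbabilityMeasure cantorMeasure :=
  inferInstanceAs <| IsProbabilityMeasure <|
    Measure.infinitePi fun _ : ℕ ↦ uniformOn (univ : Set Bool)

/-- The initial segment `x ↾ n` of `x : 2^ω`, as a binary string of length `n`. -/
def trunc (n : ℕ) (x : ℕ → Bool) : Fin n → Bool := fun i ↦ x i

variable {n : ℕ} {C : Set (ℕ → Bool)}

theorem continuous_trunc (n : ℕ) : Continuous (trunc n) :=
  continuous_pi fun i ↦ continuous_apply (i : ℕ)

theorem trunc_eq_trunc_iff {x y : ℕ → Bool} : trunc n x = trunc n y ↔ ∀ i < n, x i = y i :=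
  funext_iff.trans Fin.forall_iff

theorem trunc_extendFalse (s : Fin n → Bool) : trunc n (extendFalse s) = s :=
  funext fun i ↦ dif_pos i.2

theorem trunc_surjective (n : ℕ) : Function.Surjective (trunc n) :=
  fun s ↦ ⟨extendFalse s, trunc_extendFalse s⟩

theorem determinedBy_preimage_trunc (S : Set (Fin n → Bool)) : DeterminedBy (trunc n ⁻¹' S) n :=
  fun x y h ↦ by rw [mem_preimage, mem_preimage, trunc_eq_trunc_iff.2 h]

theorem DeterminedBy.preimage_trunc_preimage_extendFalse (h : DeterminedBy C n) :
    trunc n ⁻¹' (extendFalse ⁻¹' C) = C :=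
  ext fun x ↦ h _ _ (trunc_eq_trunc_iff.1 (trunc_extendFalse (trunc n x)))

theorem DeterminedBy.mono {m : ℕ} (h : DeterminedBy C m) (hmn : m ≤ n) : DeterminedBy C n :=
  fun x y hxy ↦ h x y fun i hi ↦ hxy i (hi.trans_le hmn)

theorem DeterminedBy.isClopen (h : DeterminedBy C n) : IsClopen C := by
  rw [← h.preimage_trunc_preimage_extendFalse]
  exact (isClopen_discrete _).preimage (continuous_trunc n)

theorem finite_setOf_determinedBy (n : ℕ) : {C : Set (ℕ → Bool) | DeterminedBy C n}.Finite :=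
  (finite_range (preimage (trunc n))).subset fun C hC ↦
    ⟨extendFalse ⁻¹' C, hC.preimage_trunc_preimage_extendFalse⟩

theorem uniformOn_univ_singleton_bool (b : Bool) : uniformOn univ {b} = (2⁻¹ : ℝ≥0∞) := by
  simp only [uniformOn_univ, Measure.count_singleton, Fintype.card_bool, Nat.cast_ofNat, one_div]

theorem cantorMeasure_preimage_trunc_singleton (s : Fin n → Bool) :
    cantorMeasure (trunc n ⁻¹' {s}) = (2 ^ n)⁻¹ := by
  have hpi : trunc n ⁻¹' {s} = (Finset.range n : Set ℕ).pi fun i ↦ {extendFalse s i} := by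
    ext x
    rw [mem_preimage, mem_singleton_iff, ← trunc_extendFalse s, trunc_eq_trunc_iff]
    simp only [trunc_extendFalse, Set.mem_pi, Finset.mem_coe, Finset.mem_range, mem_singleton_iff]
  rw [hpi, cantorMeasure, Measure.infinitePi_pi _ fun i _ ↦ measurableSet_singleton _]
  simp only [uniformOn_univ_singleton_bool, Finset.prod_const, Finset.card_range, ENNReal.inv_pow]

theorem cantorMeasure_preimage_trunc (S : Set (Fin n → Bool)) :
    cantorMeasure (trunc n ⁻¹' S) = S.ncard / 2 ^ n := by
  have hS := sum_measure_preimage_singleton (μ := cantorMeasure) S.toFinite.toFinset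
    fun s _ ↦ (continuous_trunc n).measurable (measurableSet_singleton s)
  simp only [cantorMeasure_preimage_trunc_singleton, Finset.sum_const, nsmul_eq_mul,
    Finite.coe_toFinset, ← ncard_eq_toFinset_card] at hS
  rw [← hS, div_eq_mul_inv]

theorem DeterminedBy.cantorMeasure_eq (h : DeterminedBy C n) :
    cantorMeasure C = (extendFalse (n := n) ⁻¹' C).ncard / 2 ^ n := by
  rw [← cantorMeasure_preimage_trunc, h.preimage_trunc_preimage_extendFalse]

theorem HalfMeasure.cantorMeasure_eq (h : HalfMeasure C) : cantorMeasure C = 2⁻¹ := by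
  obtain ⟨n, hC, hcard⟩ := h
  have hcard' : (2 : ℝ≥0∞) * (extendFalse (n := n) ⁻¹' C).ncard = 2 ^ n := mod_cast hcard
  rw [hC.cantorMeasure_eq, eq_comm, ENNReal.eq_div_iff (by positivity) (by finiteness), ← hcard',
    mul_right_comm, ENNReal.mul_inv_cancel two_ne_zero ENNReal.ofNat_ne_top, one_mul]

theorem halfMeasure_preimage_trunc {k : ℕ} {S : Set (Fin (k + 1) → Bool)} (hS : S.ncard = 2 ^ k) :
    HalfMeasure (trunc (k + 1) ⁻¹' S) := by
  refine ⟨k + 1, determinedBy_preimage_trunc S, ?_⟩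
  simp only [mem_preimage, trunc_extendFalse]
  rw [pow_succ', ← hS]
  rfl

instance : NullSingletonClass cantorMeasure :=
  ⟨fun x ↦ by
    rw [← univ_pi_singleton x]
    exact infinitePi_univ_pi_eq_zero (c := 2⁻¹) (by norm_num)
      fun i ↦ (uniformOn_univ_singleton_bool (x i)).le⟩

end CantorMeasure

section AvoidingFamily

open MeasureTheory

variable {n : ℕ} {U : Set (ℕ → Bool)} {x : ℕ → Bool}

/-- The union of the basic clopen sets of level `n`, i.e. of the form `{x | x ↾ n = s}`, that are
contained in `U`. -/
def cylinderInterior (U : Set (ℕ → Bool)) (n : ℕ) : Set (ℕ → Bool) :=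
  {x | PiNat.cylinder x n ⊆ U}

theorem cylinderInterior_subset : cylinderInterior U n ⊆ U :=
  fun x hx ↦ hx (PiNat.self_mem_cylinder x n)

theorem monotone_cylinderInterior (U : Set (ℕ → Bool)) : Monotone (cylinderInterior U) :=
  fun _ _ hmn x hx ↦ (PiNat.cylinder_anti x hmn).trans hx

theorem determinedBy_cylinderInterior (U : Set (ℕ → Bool)) (n : ℕ) :
    DeterminedBy (cylinderInterior U n) n := fun x y hxy ↦ by
  have hcyl : PiNat.cylinder x n = PiNat.cylinder y n := PiNat.mem_cylinder_iff_eq.1 hxy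
  simp only [cylinderInterior, mem_ofPred_eq, hcyl]

theorem exists_mem_cylinderInterior (hU : IsOpen U) (hx : x ∈ U) :
    ∃ n, x ∈ cylinderInterior U n := by
  obtain ⟨_, ⟨y, n, rfl⟩, hxy, hsub⟩ :=
    (PiNat.isTopologicalBasis_cylinders fun _ ↦ Bool).exists_subset_of_mem_open hx hU
  exact ⟨n, (PiNat.mem_cylinder_iff_eq.1 hxy).trans_subset hsub⟩

/-- The clopen sets of measure `1/2` that, at some level `n` at which they are determined, avoid
every basic clopen subset of `U` of level `n`. For open `U` of measure less than `1/2` this is an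
infinite family of which each point of `U` lies in only finitely many members. -/
def avoidingFamily (U : Set (ℕ → Bool)) : Set SoleckiBase :=
  {C | ∃ n, DeterminedBy C.val n ∧ Disjoint C.val (cylinderInterior U n)}

theorem finite_avoidingFamily_inter (hU : IsOpen U) (hx : x ∈ U) :
    (avoidingFamily U ∩ {C | x ∈ C.val}).Finite := by
  obtain ⟨m, hm⟩ := exists_mem_cylinderInterior hU hx
  refine ((finite_setOf_determinedBy m).preimage Subtype.val_injective.injOn).subset ?_
  rintro C ⟨⟨n, hC, hdisj⟩, hxC⟩
  have hnm : n ≤ m := by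
    by_contra! hmn
    exact disjoint_left.1 hdisj hxC (monotone_cylinderInterior U hmn.le hm)
  exact hC.mono hnm

theorem two_pow_lt_ncard_compl_cylinderInterior (hU : cantorMeasure U < 2⁻¹) (k : ℕ) :
    2 ^ k < (extendFalse (n := k + 1) ⁻¹' cylinderInterior U (k + 1))ᶜ.ncard := by
  set S := extendFalse (n := k + 1) ⁻¹' cylinderInterior U (k + 1)
  have hmeasure : (S.ncard : ℝ≥0∞) / 2 ^ (k + 1) < 2⁻¹ :=
    (determinedBy_cylinderInterior U (k + 1)).cantorMeasure_eq ▸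
      (measure_mono cylinderInterior_subset).trans_lt hU
  have hS : S.ncard < 2 ^ k := by
    rw [ENNReal.div_lt_iff (by simp) (by simp), pow_succ', ← mul_assoc,
      ENNReal.inv_mul_cancel two_ne_zero ENNReal.ofNat_ne_top, one_mul] at hmeasure
    exact_mod_cast hmeasure
  have hcard : S.ncard + Sᶜ.ncard = 2 ^ (k + 1) := by
    rw [ncard_add_ncard_compl, Nat.card_fun, Nat.card_fin, Nat.card_eq_fintype_card,
      Fintype.card_bool]
  omega

theorem preimage_trunc_mem_image_avoidingFamily {k : ℕ} {S : Set (Fin (k + 1) → Bool)}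
    (hS : S.ncard = 2 ^ k) (hdisj : S ⊆ (extendFalse ⁻¹' cylinderInterior U (k + 1))ᶜ) :
    trunc (k + 1) ⁻¹' S ∈ Subtype.val '' avoidingFamily U := by
  have hdet := determinedBy_preimage_trunc S
  refine ⟨⟨_, hdet.isClopen, halfMeasure_preimage_trunc hS⟩, ⟨k + 1, hdet, ?_⟩, rfl⟩
  rw [← (determinedBy_cylinderInterior U (k + 1)).preimage_trunc_preimage_extendFalse]
  exact (disjoint_left.2 hdisj).preimage _

theorem infinite_avoidingFamily (hU : cantorMeasure U < 2⁻¹) : (avoidingFamily U).Infinite := by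
  intro hfin
  let k := (Subtype.val '' avoidingFamily U).ncard
  let T := (extendFalse (n := k + 1) ⁻¹' cylinderInterior U (k + 1))ᶜ.toFinite.toFinset
  have hT : 2 ^ k + 1 ≤ T.card := by
    rw [← ncard_eq_toFinset_card]
    exact two_pow_lt_ncard_compl_cylinderInterior hU k
  have hmaps : ∀ S ∈ T.powersetCard (2 ^ k),
      trunc (k + 1) ⁻¹' (S : Set _) ∈ Subtype.val '' avoidingFamily U := fun S hS ↦ by
    obtain ⟨hST, hcard⟩ := Finset.mem_powersetCard.1 hS
    exact preimage_trunc_mem_image_avoidingFamily ((ncard_coe_finset S).trans hcard)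
      fun s hs ↦ (Finite.mem_toFinset _).1 (hST hs)
  have hle : (T.powersetCard (2 ^ k)).card ≤ k := by
    rw [← ncard_coe_finset]
    exact ncard_le_ncard_of_injOn (fun S ↦ trunc (k + 1) ⁻¹' (S : Set _)) hmaps
      ((trunc_surjective _).preimage_injective.comp Finset.coe_injective).injOn (hfin.image _)
  have hchoose : 2 ^ k + 1 ≤ T.card.choose (2 ^ k) :=
    (Nat.choose_succ_self_right (2 ^ k)).symm.le.trans (Nat.choose_le_choose _ hT)
  rw [Finset.card_powersetCard] at hle
  have := Nat.lt_two_pow_self (n := k)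
  omega

end AvoidingFamily

section SoleckiIdeal

open MeasureTheory

/-- The set of points of `2^ω` that lie in only finitely many members of the family `A`. -/
def pointFiniteLocus (A : Set SoleckiBase) : Set (ℕ → Bool) :=
  {x | (A ∩ {C | x ∈ C.val}).Finite}

theorem exists_infinite_subset_pointFiniteLocus {N : Set (ℕ → Bool)} (hN : cantorMeasure N = 0) :
    ∃ A : Set SoleckiBase, A.Infinite ∧ N ⊆ pointFiniteLocus A := by
  have hN' : cantorMeasure N < 2⁻¹ := hN ▸ ENNReal.inv_pos.2 ENNReal.ofNat_ne_top
  obtain ⟨U, hNU, hU, hlt⟩ := N.exists_isOpen_lt_of_lt _ hN'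
  exact ⟨avoidingFamily U, infinite_avoidingFamily hlt,
    fun x hx ↦ finite_avoidingFamily_inter hU (hNU hx)⟩

theorem cantorMeasure_pointFiniteLocus_le {A : Set SoleckiBase} (hA : A.Infinite) :
    cantorMeasure (pointFiniteLocus A) ≤ 2⁻¹ := by
  have := hA.to_subtype
  have hC (C : A) : cantorMeasure C.val.valᶜ ≤ 2⁻¹ := by
    obtain ⟨⟨C, hclopen, hhalf⟩, -⟩ := C
    rw [prob_compl_eq_one_sub (IsOpen.measurableSet hclopen.2), hhalf.cantorMeasure_eq,
      ENNReal.one_sub_inv_two]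
  have hliminf : pointFiniteLocus A = liminf (fun C : A ↦ C.val.valᶜ) cofinite := by
    ext x
    simp only [cofinite.liminf_set_eq, mem_compl_iff, not_not]
    rw [mem_ofPred_eq, ← finite_image_iff Subtype.val_injective.injOn]
    exact iff_of_eq (congrArg Set.Finite (Subtype.image_preimage_coe A _).symm)
  exact hliminf ▸ measure_liminf_cofinite_le hC

theorem exists_countable_of_forall_mem_soleckiIdeal {B : ℕ → Set SoleckiBase}
    (hB : ∀ n, B n ∈ SoleckiIdeal) :
    ∃ Y : Set (ℕ → Bool), Y.Countable ∧
      ∀ A, Y ⊆ pointFiniteLocus A → ∀ n, (A ∩ B n).Finite := by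
  choose F hF using hB
  refine ⟨⋃ n, F n, countable_iUnion fun n ↦ (F n).countable_toSet, fun A hY n ↦ ?_⟩
  have hfin : (⋃ y ∈ F n, A ∩ {C | y ∈ C.val}).Finite :=
    (F n).finite_toSet.biUnion fun y hy ↦ hY (mem_iUnion_of_mem n hy)
  exact hfin.subset ((inter_subset_inter_right A (hF n)).trans_eq (inter_iUnion₂ ..))

theorem exists_forall_mem_soleckiIdeal_of_countable {Y : Set (ℕ → Bool)} (hY : Y.Countable) :
    ∃ B : ℕ → Set SoleckiBase, (∀ n, B n ∈ SoleckiIdeal) ∧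
      ∀ A, (∀ n, (A ∩ B n).Finite) → Y ⊆ pointFiniteLocus A := by
  obtain ⟨y, hy⟩ := countable_iff_exists_subset_range.1 hY
  refine ⟨fun n ↦ {C | y n ∈ C.val}, fun n ↦ ⟨{y n}, ?_⟩, fun A hA x hx ↦ ?_⟩
  · rw [Finset.set_biUnion_singleton]
  · obtain ⟨n, rfl⟩ := hy hx
    exact hA n

theorem sInf_nonStarOmegaFam_soleckiIdeal_le_covOmegaNull :
    sInf (nonStarOmegaFam SoleckiIdeal) ≤ covOmegaNull := by
  obtain ⟨f, hf⟩ := exists_quasiMeasurePreserving cantorMeasure (volume : Measure ℝ)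
  have hcover (N : Set ℝ) (hN : volume N = 0) :
      ∃ A : Set SoleckiBase, A.Infinite ∧ f ⁻¹' N ⊆ pointFiniteLocus A :=
    exists_infinite_subset_pointFiniteLocus (hf.preimage_null hN)
  choose! ψ hψ using hcover
  rw [sInf_nonStarOmegaFam_eq_dominatingNumber, covOmegaNull_eq_dominatingNumber]
  refine dominatingNumber_le_of_tukey (ψ := ψ) (fun Y hY ↦ ⟨Y, hY.measure_zero _, Subset.rfl⟩)
    (fun N hN ↦ (hψ N hN).1) fun B hB ↦ ?_
  obtain ⟨Y, hY, hYB⟩ := exists_countable_of_forall_mem_soleckiIdeal hB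
  exact ⟨f '' Y, hY.image f, fun N hN hYN ↦
    hYB _ ((image_subset_iff.1 hYN).trans (hψ N hN).2)⟩

theorem covOmegaNull_le_sInf_nonStarOmegaFam_soleckiIdeal :
    covOmegaNull ≤ sInf (nonStarOmegaFam SoleckiIdeal) := by
  obtain ⟨f, hf⟩ := exists_quasiMeasurePreserving (volume : Measure ℝ)
    (Measure.infinitePi fun _ : ℕ ↦ cantorMeasure)
  rw [sInf_nonStarOmegaFam_eq_dominatingNumber, covOmegaNull_eq_dominatingNumber]
  refine dominatingNumber_le_of_tukey
    (ψ := fun A ↦ f ⁻¹' univ.pi fun _ ↦ pointFiniteLocus A) (fun B hB ↦ ?_) (fun A hA ↦ ?_)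
    fun R hR ↦ ?_
  · obtain ⟨Y, hY, hYB⟩ := exists_countable_of_forall_mem_soleckiIdeal hB
    obtain ⟨A, hA, hYA⟩ := exists_infinite_subset_pointFiniteLocus (hY.measure_zero cantorMeasure)
    exact ⟨A, hA, hYB A hYA⟩
  · exact hf.preimage_null (infinitePi_univ_pi_eq_zero ENNReal.one_half_lt_one
      fun _ ↦ cantorMeasure_pointFiniteLocus_le hA)
  · have hY : (⋃ i, (fun r ↦ f r i) '' R).Countable := countable_iUnion fun i ↦ hR.image _
    obtain ⟨B, hB, hBY⟩ := exists_forall_mem_soleckiIdeal_of_countable hY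
    exact ⟨B, hB, fun A _ hAB r hr i _ ↦
      hBY A hAB (mem_iUnion_of_mem i (mem_image_of_mem _ hr))⟩

end SoleckiIdeal

/-- `non*_ω(𝒮) = cov_ω(𝒩)` for the Solecki ideal `𝒮`. -/
theorem stmt12 : sInf (nonStarOmegaFam SoleckiIdeal) = covOmegaNull :=
  sInf_nonStarOmegaFam_soleckiIdeal_le_covOmegaNull.antisymm
    covOmegaNull_le_sInf_nonStarOmegaFam_soleckiIdeal

end
end

section
/- non*_ω(ℰ𝒟) = cov(ℳ), where ℰ𝒟 is the eventually different ideal and cov(ℳ) is the covering number of the meager ideal. -/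
open Cardinal Filter Set
open scoped ENNReal

noncomputable section

/-!
If `𝒜` witnesses `non*_ω(ℰ𝒟)`, applying it to the graph of `x : ω^ω` together with all columns
`{n} × ω` yields an `A ∈ 𝒜` that meets infinitely many columns and is almost disjoint from `x`.
The functions almost disjoint from such an `A` form a meager set, so `#𝒜` meager sets cover `ω^ω`.

Conversely, a family of functions whose graphs do not witness `non*_ω(ℰ𝒟)` is guessed infinitely
often by countably many functions, because a set in `ℰ𝒟` is, above almost every `n`, covered by
boundedly many functions. Following Bartoszyński, countably many guesses of long finite pieces of
the functions can be merged, by Hall's theorem, into a single guess, even along prescribed infinite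
subsets of `ω`. Such guesses produce a point escaping the given meager sets: if `h n` is a string
leading from each of the first `n` strings into the `n`-th dense open set, concatenate guessed
values of `h` along a sequence growing so fast that infinitely often the correct guess keeps the
code of the concatenation below the next term.
-/

section Combinatorics

theorem exists_injective_mem_of_lt_card {β : Type*} {T : Set ℕ} {D : ℕ → Finset β}
    (hD : ∀ t ∈ T, t < (D t).card) :
    ∃ k : T → β, Function.Injective k ∧ ∀ t : T, k t ∈ D t := by
  classical
  rw [← Finset.all_card_le_biUnion_card_iff_exists_injective fun t : T ↦ D t]
  intro s
  obtain rfl | hs := s.eq_empty_or_nonempty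
  · simp
  set m := s.max' hs
  have hsub : s.map (Function.Embedding.subtype _) ⊆ Finset.range (m + 1) := by
    intro t ht
    obtain ⟨u, hu, rfl⟩ := Finset.mem_map.1 ht
    exact Finset.mem_range_succ_iff.2 (s.le_max' u hu)
  calc s.card ≤ m + 1 := by simpa using Finset.card_le_card hsub
    _ ≤ (D m).card := hD m m.2
    _ ≤ (s.biUnion fun t ↦ D t).card :=
      Finset.card_le_card (Finset.subset_biUnion_of_mem (fun t : T ↦ D t) (s.max'_mem hs))

theorem exists_forall_lt_card_image_fst_exists_mem {β γ : Type*} [DecidableEq β] [Nonempty γ]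
    (S : ℕ → Finset (β × γ)) :
    ∃ g : β → γ, ∀ t < ((S t).image Prod.fst).card, ∃ p ∈ S t, g p.1 = p.2 := by
  obtain ⟨k, hk, hkS⟩ := exists_injective_mem_of_lt_card
    (T := {t | t < ((S t).image Prod.fst).card}) fun _ ht ↦ ht
  simp only [Finset.mem_image] at hkS
  choose p hpS hpk using hkS
  refine ⟨Function.extend k (fun t ↦ (p t).2) fun _ ↦ Classical.arbitrary γ, fun t ht ↦ ?_⟩
  exact ⟨p ⟨t, ht⟩, hpS _, by rw [hpk, hk.extend_apply]⟩

theorem frequently_le_iterate_succ {F G : ℕ → ℕ} (hF : Monotone F) (hG : Monotone G)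
    (hlt : ∀ n, n < G n) (hFG : ∃ᶠ n in atTop, F (F n) ≤ G n) (m : ℕ) :
    ∃ᶠ k in atTop, F (G^[k] m) ≤ G^[k + 1] m := by
  have hsucc (k : ℕ) : G^[k + 1] m = G (G^[k] m) := Function.iterate_succ_apply' G k m
  have hmono : StrictMono fun k ↦ G^[k] m := strictMono_nat_of_lt_succ fun k ↦ by
    simpa only [hsucc] using hlt _
  refine frequently_atTop.2 fun N ↦ ?_
  obtain ⟨n, hNn, hn⟩ := frequently_atTop.1 hFG (G^[N] m)
  obtain ⟨k, hNk, hkn, hnk⟩ : ∃ k ≥ N, G^[k] m ≤ n ∧ n < G^[k + 1] m := by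
    have hunion : ⋃ k ∈ Ici N, Ico (G^[k] m) (G^[k + 1] m) = Ici (G^[N] m) :=
      biUnion_Ici_Ico_map_succ (f := fun k ↦ G^[k] m) (fun i hi ↦ hmono.monotone hi)
        fun hbdd ↦ (Ici_infinite N).image hmono.injective.injOn hbdd.finite
    obtain ⟨k, hk, hkn, hnk⟩ := mem_iUnion₂.1 (hunion.ge hNn)
    exact ⟨k, hk, hkn, hnk⟩
  by_contra! hlarge
  exact lt_irrefl (G n) <| calc
    G n ≤ G^[k + 2] m := by rw [hsucc (k + 1)]; exact hG hnk.le
    _ < F (G^[k + 1] m) := hlarge (k + 1) (hNk.trans k.le_succ)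
    _ ≤ F (F (G^[k] m)) := hF (hlarge k hNk).le
    _ ≤ F (F n) := hF (hF hkn)
    _ ≤ G n := hn

end Combinatorics

/-- Every family of functions `ω → ω` indexed by `ι` is guessed by countably many functions: each
member of the family agrees infinitely often with one of them. Below `non*_ω(ℰ𝒟)` every index set
has this property. -/
def IsCountablyGuessable (ι : Type*) : Prop :=
  ∀ h : ι → ℕ → ℕ, ∃ g : ℕ → ℕ → ℕ, ∀ a, ∃ i, ∃ᶠ n in atTop, g i n = h a n

namespace IsCountablyGuessable

variable {ι β : Type*}

theorem exists_frequently_eq_of_countable [Countable β] [Nonempty β] (hι : IsCountablyGuessable ι)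
    (h : ι → ℕ → β) : ∃ g : ℕ → ℕ → β, ∀ a, ∃ i, ∃ᶠ n in atTop, g i n = h a n := by
  obtain ⟨e, he⟩ := exists_surjective_nat β
  obtain ⟨g, hg⟩ := hι fun a n ↦ Function.surjInv he (h a n)
  refine ⟨fun i n ↦ e (g i n), fun a ↦ (hg a).imp fun i hi ↦ hi.mono fun n hn ↦ ?_⟩
  simp only [hn, Function.surjInv_eq]

-- The `i`-th guess at `n` is stored at position `Nat.pair n i`, which is less than `(n + 1) ^ 2`
-- as soon as `i ≤ n`; guessing `(n + 1) ^ 2` values at once makes room for a transversal.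
theorem exists_frequently_and_eq [Countable β] [Nonempty β] (hι : IsCountablyGuessable ι)
    {p : ι → ℕ → Prop} (hp : ∀ a, ∃ᶠ n in atTop, p a n) (h : ι → ℕ → β) :
    ∃ g : ℕ → β, ∀ a, ∃ᶠ n in atTop, p a n ∧ g n = h a n := by
  classical
  have hlarge (a : ι) (n : ℕ) : {m | p a m ∧ n ≤ m}.Infinite :=
    Nat.frequently_atTop_iff_infinite.1 ((hp a).and_eventually (eventually_ge_atTop n))
  choose F hF hFcard using fun a n ↦ (hlarge a n).exists_subset_card_eq ((n + 1) ^ 2)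
  let graph (a : ι) (n : ℕ) : Finset (ℕ × β) := (F a n).image fun m ↦ (m, h a m)
  have card_fst_graph (a : ι) (n : ℕ) : ((graph a n).image Prod.fst).card = (n + 1) ^ 2 := by
    simp [graph, Finset.image_image, Function.comp_def, hFcard]
  obtain ⟨g, hg⟩ := hι.exists_frequently_eq_of_countable graph
  obtain ⟨u, hu⟩ :=
    exists_forall_lt_card_image_fst_exists_mem fun t ↦ g t.unpair.2 t.unpair.1
  refine ⟨u, fun a ↦ frequently_atTop.2 fun N ↦ ?_⟩
  obtain ⟨i, hi⟩ := hg a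
  obtain ⟨n, hn, hgn⟩ := frequently_atTop.1 hi (max N i)
  obtain ⟨hNn, hin⟩ := max_le_iff.1 hn
  obtain ⟨q, hq, huq⟩ : ∃ q ∈ graph a n, u q.1 = q.2 := by
    have hpair : Nat.pair n i < (n + 1) ^ 2 := by
      simpa [hin] using Nat.pair_lt_max_add_one_sq n i
    simpa [hgn, card_fst_graph, hpair] using hu (Nat.pair n i)
  obtain ⟨m, hm, rfl⟩ := Finset.mem_image.1 hq
  obtain ⟨hpm, hnm⟩ := hF a n hm
  exact ⟨m, hNn.trans hnm, hpm, huq⟩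

theorem exists_monotone_frequently_le (hι : IsCountablyGuessable ι) (f : ι → ℕ → ℕ) :
    ∃ g : ℕ → ℕ, Monotone g ∧ (∀ n, n < g n) ∧ ∀ a, ∃ᶠ n in atTop, f a n ≤ g n := by
  obtain ⟨g, hg⟩ := hι.exists_frequently_and_eq (p := fun _ _ ↦ True)
    (fun _ ↦ Frequently.of_forall fun _ ↦ trivial) f
  have hle (n : ℕ) := le_partialSups (fun n ↦ max (g n) (n + 1)) n
  refine ⟨partialSups fun n ↦ max (g n) (n + 1), OrderHom.monotone _,
    fun n ↦ (le_max_right _ _).trans (hle n), fun a ↦ (hg a).mono fun n hn ↦ ?_⟩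
  exact hn.2.ge.trans ((le_max_left _ _).trans (hle n))

theorem exists_strictMono_frequently_le_succ (hι : IsCountablyGuessable ι) (f : ι → ℕ → ℕ)
    (m : ℕ) :
    ∃ j : ℕ → ℕ, j 0 = m ∧ StrictMono j ∧ ∀ a, ∃ᶠ k in atTop, f a (j k) ≤ j (k + 1) := by
  obtain ⟨G, hG, hlt, hfG⟩ := hι.exists_monotone_frequently_le
    fun a n ↦ partialSups (f a) (partialSups (f a) n)
  refine ⟨fun k ↦ G^[k] m, rfl, strictMono_nat_of_lt_succ fun k ↦ ?_, fun a ↦ ?_⟩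
  · rw [Function.iterate_succ_apply']
    exact hlt _
  · exact (frequently_le_iterate_succ (partialSups (f a)).monotone hG hlt (hfG a) m).mono
      fun k hk ↦ (le_partialSups (f a) _).trans hk

theorem exists_prefix_chain_frequently_eq_append {α : Type*} (hι : IsCountablyGuessable ι)
    {c : List α → ℕ} (hc : Function.Injective c) (h : ι → ℕ → List α) :
    ∃ s : ℕ → List α, (∀ k, s k <+: s (k + 1)) ∧
      ∀ a, ∃ᶠ n in atTop, ∃ k, c (s k) ≤ n ∧ s (k + 1) = s k ++ h a n := by
  have : Countable (List α) := hc.countable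
  have hbound (a : ι) (n : ℕ) : ∃ b, ∀ s, c s ≤ n → c (s ++ h a n) ≤ b := by
    have hfin : {s | c s ≤ n}.Finite := (finite_Iic n).preimage hc.injOn
    obtain ⟨b, hb⟩ := (hfin.image fun s ↦ c (s ++ h a n)).bddAbove
    exact ⟨b, fun s hs ↦ hb ⟨s, hs, rfl⟩⟩
  choose f hf using hbound
  obtain ⟨j, hj₀, hj, hfj⟩ := hι.exists_strictMono_frequently_le_succ f (c [])
  obtain ⟨g, hg⟩ := hι.exists_frequently_and_eq hfj fun a k ↦ h a (j k)
  let step (k : ℕ) (s : List α) : List α := if c (s ++ g k) ≤ j (k + 1) then s ++ g k else s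
  let s (k : ℕ) : List α := Nat.rec [] step k
  have hsj (k : ℕ) : c (s k) ≤ j k := by
    induction k with
    | zero => exact hj₀.ge
    | succ k ih =>
      change c (step k (s k)) ≤ j (k + 1)
      dsimp only [step]
      split_ifs with hk
      exacts [hk, ih.trans (hj k.lt_succ_self).le]
  refine ⟨s, fun k ↦ ?_, fun a ↦ hj.tendsto_atTop.frequently ((hg a).mono ?_)⟩
  · change s k <+: step k (s k)
    dsimp only [step]
    split_ifs
    exacts [List.prefix_append _ _, List.prefix_rfl]
  · rintro k ⟨hk, hgk⟩
    refine ⟨k, hsj k, ?_⟩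
    rw [← hgk]
    exact if_pos (by simpa only [hgk] using (hf a (j k) (s k) (hsj k)).trans hk)

end IsCountablyGuessable

section Cylinder

variable {α : Type}

/-- The basic open set of all sequences extending the finite sequence `s`. It is indexed by lists,
unlike `PiNat.cylinder`, so that one string can be appended to several initial segments. -/
def listCylinder (s : List α) : Set (ℕ → α) := {x | seg x s.length = s}

theorem seg_take (x : ℕ → α) (m n : ℕ) : (seg x n).take m = seg x (min m n) := by
  simp only [seg, ← List.map_take, List.take_range]

theorem listCylinder_seg (x : ℕ → α) (n : ℕ) :
    listCylinder (seg x n) = PiNat.cylinder x n := by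
  ext y
  simp [listCylinder, seg, PiNat.cylinder, List.map_inj_left]

theorem listCylinder_nonempty [Nonempty α] (s : List α) : (listCylinder s).Nonempty := by
  inhabit α
  exact ⟨fun i ↦ s.getD i default, List.ext_getElem (by simp [seg]) (by simp +contextual [seg])⟩

theorem listCylinder_append_subset (s t : List α) : listCylinder (s ++ t) ⊆ listCylinder s := by
  intro x (hx : seg x (s ++ t).length = s ++ t)
  have htake := congrArg (List.take s.length) hx
  rwa [seg_take, List.length_append, Nat.min_eq_left (Nat.le_add_right ..), List.take_left]
    at htake

theorem exists_forall_mem_listCylinder [Nonempty α] {s : ℕ → List α}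
    (hs : ∀ k, s k <+: s (k + 1)) : ∃ x : ℕ → α, ∀ k, x ∈ listCylinder (s k) := by
  have hchain ⦃k l : ℕ⦄ (hkl : k ≤ l) : s k <+: s l :=
    Nat.rel_of_forall_rel_succ_of_le (· <+: ·) hs hkl
  have hvalue (i : ℕ) : ∃ v, ∀ k (hi : i < (s k).length), v = (s k)[i] := by
    by_cases h : ∃ k, i < (s k).length
    · obtain ⟨k, hk⟩ := h
      refine ⟨(s k)[i], fun l hl ↦ ?_⟩
      obtain hkl | hlk := le_total k l
      exacts [(hchain hkl).getElem hk, ((hchain hlk).getElem hl).symm]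
    · exact ⟨Classical.arbitrary α, fun k hk ↦ (h ⟨k, hk⟩).elim⟩
  choose x hx using hvalue
  exact ⟨x, fun k ↦ List.ext_getElem (by simp [seg]) fun i _ hi ↦ by simpa [seg] using hx i k hi⟩

variable [TopologicalSpace α] [DiscreteTopology α]

theorem isOpen_listCylinder (s : List α) : IsOpen (listCylinder s) := by
  obtain hs | ⟨x, hx⟩ := (listCylinder s).eq_empty_or_nonempty
  · exact hs ▸ isOpen_empty
  rw [← show seg x s.length = s from hx, listCylinder_seg]
  exact PiNat.isOpen_cylinder _ x s.length

variable [Nonempty α] {D : Set (ℕ → α)}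

theorem exists_listCylinder_append_subset (hDo : IsOpen D) (hDd : Dense D) (s : List α) :
    ∃ t, listCylinder (s ++ t) ⊆ D := by
  obtain ⟨x, hxs, hxD⟩ :=
    hDd.inter_open_nonempty _ (isOpen_listCylinder s) (listCylinder_nonempty s)
  obtain ⟨_, ⟨y, n, rfl⟩, hxy, hyD⟩ :=
    (PiNat.isTopologicalBasis_cylinders fun _ ↦ α).exists_subset_of_mem_open hxD hDo
  set m := max s.length n
  have hseg : s ++ (seg x m).drop s.length = seg x m := by
    conv_lhs => enter [1]; rw [← show seg x s.length = s from hxs]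
    rw [← Nat.min_eq_left (le_max_left s.length n), ← seg_take, Nat.min_eq_left (le_max_left ..),
      List.take_append_drop]
  refine ⟨(seg x m).drop s.length, ?_⟩
  rw [hseg, listCylinder_seg]
  exact (PiNat.cylinder_anti x (le_max_right _ _)).trans
    ((PiNat.mem_cylinder_iff_eq.1 hxy).trans_subset hyD)

theorem exists_forall_listCylinder_append_subset (hDo : IsOpen D) (hDd : Dense D)
    {S : Set (List α)} (hS : S.Finite) : ∃ t, ∀ s ∈ S, listCylinder (s ++ t) ⊆ D := by
  induction S, hS using Set.Finite.induction_on with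
  | empty => exact ⟨[], by simp⟩
  | @insert s S _ _ ih =>
    obtain ⟨t, ht⟩ := ih
    obtain ⟨u, hu⟩ := exists_listCylinder_append_subset hDo hDd (s ++ t)
    refine ⟨t ++ u, forall_mem_insert.2 ⟨?_, fun r hr ↦ ?_⟩⟩
    · rwa [← List.append_assoc]
    · rw [← List.append_assoc]
      exact (listCylinder_append_subset _ _).trans (ht r hr)

end Cylinder

section Meagre

theorem exists_antitone_isOpen_dense_of_isMeagre {X : Type*} [TopologicalSpace X] [BaireSpace X]
    {M : Set X} (hM : IsMeagre M) :
    ∃ D : ℕ → Set X, Antitone D ∧ (∀ n, IsOpen (D n)) ∧ (∀ n, Dense (D n)) ∧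
      Disjoint M (⋂ n, D n) := by
  obtain ⟨t, htM, htδ, htd⟩ := mem_residual.1 hM
  obtain ⟨f, hf, rfl⟩ := isGδ_iff_eq_iInter_nat.1 htδ
  refine ⟨fun n ↦ ⋂ i ∈ Iic n, f i,
    fun m n hmn ↦ biInter_subset_biInter_left (Iic_subset_Iic.2 hmn),
    fun n ↦ (finite_Iic n).isOpen_biInter fun i _ ↦ hf i,
    fun n ↦ htd.mono (subset_iInter₂ fun i _ ↦ iInter_subset f i), ?_⟩
  refine (disjoint_compl_right.mono_right htM).mono_right (iInter_mono fun n ↦ ?_)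
  exact biInter_subset_of_mem self_mem_Iic

theorem isMeagre_setOf_eventually_notMem {X : ℕ → Type*} [∀ n, TopologicalSpace (X n)]
    {U : ∀ n, Set (X n)} (hU : ∀ n, IsOpen (U n)) (hne : ∃ᶠ n in atTop, (U n).Nonempty) :
    IsMeagre {x : ∀ n, X n | ∀ᶠ n in atTop, x n ∉ U n} := by
  have hcompl : {x : ∀ n, X n | ∀ᶠ n in atTop, x n ∉ U n}ᶜ = ⋂ N, ⋃ n ≥ N, {x | x n ∈ U n} := by
    ext x
    simp
  rw [IsMeagre, hcompl, countable_iInter_mem]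
  refine fun N ↦ residual_of_dense_open
    (isOpen_biUnion fun n _ ↦ (hU n).preimage (continuous_apply n)) fun y ↦ ?_
  have : ∀ n, ∃ z, (U n).Nonempty → z ∈ U n := fun n ↦ by
    by_cases h : (U n).Nonempty
    exacts [h.imp fun _ hz _ ↦ hz, ⟨y n, fun h' ↦ (h h').elim⟩]
  choose z hz using this
  have hlim : Tendsto (fun n ↦ Function.update y n (z n)) atTop (nhds y) :=
    tendsto_pi_nhds.2 fun i ↦ tendsto_const_nhds.congr' <|
      (eventually_ne_atTop i).mono fun n hn ↦ (Function.update_of_ne hn.symm _ _).symm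
  refine mem_closure_of_frequently_of_tendsto
    ((hne.and_eventually (eventually_ge_atTop N)).mono fun n hn ↦ ?_) hlim
  exact mem_biUnion hn.2 (by simpa using hz n hn.1)

theorem IsCountablyGuessable.exists_forall_notMem_of_isMeagre {ι : Type*} {α : Type}
    [TopologicalSpace α] [DiscreteTopology α] [Countable α] [Nonempty α]
    (hι : IsCountablyGuessable ι) {M : ι → Set (ℕ → α)} (hM : ∀ a, IsMeagre (M a)) :
    ∃ x, ∀ a, x ∉ M a := by
  choose D hDanti hDo hDd hDM using fun a ↦ exists_antitone_isOpen_dense_of_isMeagre (hM a)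
  obtain ⟨c, hc⟩ := exists_injective_nat (List α)
  have hfin (n : ℕ) : {s | c s ≤ n}.Finite := (finite_Iic n).preimage hc.injOn
  choose h hhD using fun a n ↦
    exists_forall_listCylinder_append_subset (hDo a n) (hDd a n) (hfin n)
  obtain ⟨s, hs, hsh⟩ := hι.exists_prefix_chain_frequently_eq_append hc h
  obtain ⟨x, hx⟩ := exists_forall_mem_listCylinder hs
  refine ⟨x, fun a hxM ↦ disjoint_left.1 (hDM a) hxM (mem_iInter.2 fun n ↦ ?_)⟩
  obtain ⟨m, hnm, k, hk, hsk⟩ := frequently_atTop.1 (hsh a) n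
  exact hDanti a hnm (hhD a m (s k) hk (hsk ▸ hx (k + 1)))

end Meagre

section EventuallyDifferent

theorem finite_inter_graphOn_univ_iff {β : Type*} {A : Set (ℕ × β)} {f : ℕ → β} :
    (A ∩ Set.univ.graphOn f).Finite ↔ ∀ᶠ n in atTop, (n, f n) ∉ A := by
  have himage : A ∩ Set.univ.graphOn f = (fun n ↦ (n, f n)) '' {n | (n, f n) ∈ A} := by
    ext ⟨n, m⟩
    aesop
  rw [himage, finite_image_iff fun m _ n _ h ↦ congrArg Prod.fst h, ← Nat.cofinite_eq_atTop,
    eventually_cofinite]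
  simp only [not_not]

theorem frequently_nonempty_of_infinite {β : Type*} {A : Set (ℕ × β)} (hA : A.Infinite)
    (hfin : ∀ n, (A ∩ {n} ×ˢ Set.univ).Finite) : ∃ᶠ n in atTop, {m | (n, m) ∈ A}.Nonempty := by
  by_contra hcon
  obtain ⟨N, hN⟩ := eventually_atTop.1 (not_frequently.1 hcon)
  refine hA (((finite_Iio N).biUnion fun n _ ↦ hfin n).subset fun p hp ↦ ?_)
  have hpN : p.1 < N := not_le.1 fun h ↦ hN p.1 h ⟨p.2, hp⟩
  exact mem_biUnion hpN ⟨hp, rfl, trivial⟩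

theorem graphOn_univ_mem_EDIdeal (f : ℕ → ℕ) : Set.univ.graphOn f ∈ EDIdeal :=
  ⟨1, .of_forall fun n ↦ by simp [eq_comm]⟩

theorem singleton_prod_univ_mem_EDIdeal (n : ℕ) : {n} ×ˢ Set.univ ∈ EDIdeal :=
  ⟨0, (eventually_ne_atTop n).mono fun k hk ↦ by simp [hk]⟩

-- `Nat.nth` enumerates the `n`-th section of `B`.
theorem exists_frequently_nth_eq_of_mem_EDIdeal {B : Set (ℕ × ℕ)} (hB : B ∈ EDIdeal)
    {f : ℕ → ℕ} (hf : ∃ᶠ n in atTop, (n, f n) ∈ B) :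
    ∃ j, ∃ᶠ n in atTop, Nat.nth (fun m ↦ (n, m) ∈ B) j = f n := by
  obtain ⟨k, hk⟩ := hB
  by_contra! hne
  have hall := (eventually_all_finite (finite_Iio k)).2 fun j _ ↦ hne j
  obtain ⟨n, hn, ⟨hfin, hcard⟩, hnth⟩ := (hf.and_eventually (hk.and hall)).exists
  obtain ⟨j, hj, hjn⟩ := Nat.exists_lt_card_finite_nth_eq hfin hn
  rw [← ncard_eq_toFinset_card _ hfin] at hj
  exact hnth j (hj.trans_le hcard) hjn

theorem exists_mem_nonStarOmegaFam_le_of_not_isCountablyGuessable {ι : Type}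
    (hι : ¬ IsCountablyGuessable ι) : ∃ c ∈ nonStarOmegaFam EDIdeal, c ≤ #ι := by
  simp only [IsCountablyGuessable, not_forall, not_exists] at hι
  obtain ⟨h, h_unguessed⟩ := hι
  refine ⟨#(range fun a ↦ Set.univ.graphOn (h a)), ⟨_, ?_, fun B hB ↦ ?_, rfl⟩, mk_range_le⟩
  · rintro _ ⟨a, rfl⟩
    exact infinite_univ.image (fun m _ n _ hmn ↦ congrArg Prod.fst hmn)
  · obtain ⟨a, ha⟩ := h_unguessed fun i n ↦ Nat.nth (fun m ↦ (n, m) ∈ B i.unpair.1) i.unpair.2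
    refine ⟨_, ⟨a, rfl⟩, fun b ↦ ?_⟩
    rw [inter_comm, finite_inter_graphOn_univ_iff]
    by_contra hfreq
    obtain ⟨j, hj⟩ := exists_frequently_nth_eq_of_mem_EDIdeal (hB b) hfreq
    exact ha (Nat.pair b j) (by simpa using hj)

theorem exists_mem_nonStarOmegaFam_le_of_meagre_cover {𝒞 : Set (Set (ℕ → ℕ))}
    (h𝒞 : 𝒞 ⊆ meagerIdeal ℕ) (hcov : ⋃₀ 𝒞 = Set.univ) :
    ∃ c ∈ nonStarOmegaFam EDIdeal, c ≤ #𝒞 := by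
  refine exists_mem_nonStarOmegaFam_le_of_not_isCountablyGuessable fun hguess ↦ ?_
  obtain ⟨x, hx⟩ := hguess.exists_forall_notMem_of_isMeagre
    (M := fun C : 𝒞 ↦ (C : Set (ℕ → ℕ))) fun C ↦ h𝒞 C.2
  obtain ⟨C, hC, hxC⟩ := hcov.ge (mem_univ x)
  exact hx ⟨C, hC⟩ hxC

theorem exists_meagre_cover_le_of_mem_nonStarOmegaFam {c : Cardinal}
    (hc : c ∈ nonStarOmegaFam EDIdeal) : ∃ 𝒞 ⊆ meagerIdeal ℕ, ⋃₀ 𝒞 = Set.univ ∧ #𝒞 ≤ c := by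
  obtain ⟨𝒜, hinf, hwit, rfl⟩ := hc
  let avoiding (A : Set (ℕ × ℕ)) : Set (ℕ → ℕ) := {x | ∀ᶠ n in atTop, (n, x n) ∉ A}
  let 𝒜' := {A ∈ 𝒜 | ∃ᶠ n in atTop, {m | (n, m) ∈ A}.Nonempty}
  refine ⟨avoiding '' 𝒜', ?_, eq_univ_of_forall fun x ↦ ?_,
    mk_image_le.trans (mk_le_mk_of_subset (sep_subset _ _))⟩
  · rintro _ ⟨A, ⟨-, hA⟩, rfl⟩
    exact isMeagre_setOf_eventually_notMem (fun _ ↦ isOpen_discrete _) hA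
  · let B : ℕ → Set (ℕ × ℕ)
      | 0 => Set.univ.graphOn x
      | n + 1 => {n} ×ˢ Set.univ
    have hB : ∀ n, B n ∈ EDIdeal
      | 0 => graphOn_univ_mem_EDIdeal x
      | n + 1 => singleton_prod_univ_mem_EDIdeal n
    obtain ⟨A, hA, hAB⟩ := hwit B hB
    have hcolumns := frequently_nonempty_of_infinite (hinf A hA) fun n ↦ hAB (n + 1)
    exact ⟨avoiding A, ⟨A, ⟨hA, hcolumns⟩, rfl⟩, finite_inter_graphOn_univ_iff.1 (hAB 0)⟩

end EventuallyDifferent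

/-- `non*_ω(ℰ𝒟) = cov(ℳ)`, the covering number of the meager ideal of
the Baire space `ω^ω`. -/
theorem stmt13 : sInf (nonStarOmegaFam EDIdeal) = covIdeal (meagerIdeal ℕ) := by
  refine csInf_eq_csInf_of_forall_exists_le (fun c hc ↦ ?_) ?_
  · obtain ⟨𝒞, h𝒞, hcov, hle⟩ := exists_meagre_cover_le_of_mem_nonStarOmegaFam hc
    exact ⟨#𝒞, ⟨𝒞, h𝒞, hcov, rfl⟩, hle⟩
  · rintro _ ⟨𝒞, h𝒞, hcov, rfl⟩
    exact exists_mem_nonStarOmegaFam_le_of_meagre_cover h𝒞 hcov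

end
end
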